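/- arXiv:1805.11855 — 2 statements merged into one kernel-verified Lean document; each statement's English description precedes it below -/
import Mathlib

section
/- Let −1 < α ≤ 1/2, and let j > 0 be the second positive zero of the Bessel function J_α, i.e. J_α(j) = 0 and there exists exactly one z with 0 < z < j and J_α(z) = 0. If β is a real number with −1/2 < β < α + 1 and ∫₀^j t^{−β} J_α(t) dt = 0, then max(−α−1, −1/2) < β ≤ −(α+1)/3. -/
open Real

/-- The Bessel function of the first kind of real order `α`. -/
noncomputable def besselJ (α : ℝ) (t : ℝ) : ℝ :=
  ∑' k : ℕ, (-1 : ℝ) ^ k / ((k.factorial : ℝ) * Real.Gamma (α + k + 1)) *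
    (t / 2) ^ (2 * (k : ℝ) + α)



/-- scaled Bessel coefficients -/
noncomputable def vf (m : ℝ) : ℕ → ℝ
  | 0 => 1 + 3/2*m
  | n+1 => vf m n * ((1+3/2*m) / ((n+2)*(3/2*m+n+1)))

noncomputable def cf (m : ℝ) (n : ℕ) : ℝ := vf m n / (m+n+1)

lemma uni0 (s : ℝ) (h0 : 0 ≤ s) (h1 : s ≤ 43/10) :
  0 ≤ 1/2 - 1/3*s + (58/625)*s^2 - (327/25000)*s^3 + (11/10000)*s^4 - (33/500000)*s^5 + (27/10000000)*s^6 - (11/100000000)*s^7 := by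
  have ht : 0 ≤ 43/10 - s := by linarith
  nlinarith [mul_nonneg (sq_nonneg (s-38/10)) (pow_nonneg ht 1), mul_nonneg (sq_nonneg (s-38/10)) (pow_nonneg ht 2), mul_nonneg (sq_nonneg (s-38/10)) (pow_nonneg ht 3), mul_nonneg (sq_nonneg (s-38/10)) (pow_nonneg ht 4), mul_nonneg (sq_nonneg (s-38/10)) (pow_nonneg ht 5), sq_nonneg (s-38/10)]
lemma uni1 (s : ℝ) (h0 : 0 ≤ s) (h1 : s ≤ 43/10) :
  0 ≤ 5/8 - 1/2*s + (393/2500)*s^2 - (123/5000)*s^3 + (111/50000)*s^4 - (67/500000)*s^5 + (53/10000000)*s^6 - (9/50000000)*s^7 := by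
  have ht : 0 ≤ 43/10 - s := by linarith
  nlinarith [mul_nonneg (sq_nonneg (s-38/10)) (pow_nonneg ht 1), mul_nonneg (sq_nonneg (s-38/10)) (pow_nonneg ht 2), mul_nonneg (sq_nonneg (s-38/10)) (pow_nonneg ht 3), mul_nonneg (sq_nonneg (s-38/10)) (pow_nonneg ht 4), mul_nonneg (sq_nonneg (s-38/10)) (pow_nonneg ht 5), sq_nonneg (s-38/10)]
lemma uni2 (s : ℝ) (h0 : 0 ≤ s) (h1 : s ≤ 43/10) :
  0 ≤ 3/4 - 2/3*s + (1163/5000)*s^2 - (2087/50000)*s^3 + (449/100000)*s^4 - (33/100000)*s^5 + (21/1250000)*s^6 - (7/10000000)*s^7 := by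
  have ht : 0 ≤ 43/10 - s := by linarith
  nlinarith [mul_nonneg (sq_nonneg (s-38/10)) (pow_nonneg ht 1), mul_nonneg (sq_nonneg (s-38/10)) (pow_nonneg ht 2), mul_nonneg (sq_nonneg (s-38/10)) (pow_nonneg ht 3), mul_nonneg (sq_nonneg (s-38/10)) (pow_nonneg ht 4), mul_nonneg (sq_nonneg (s-38/10)) (pow_nonneg ht 5), sq_nonneg (s-38/10)]
lemma cb3 (m : ℝ) (h0 : 0 ≤ m) (h1 : m ≤ 1) :
    (1-m)*((58/625)*(1-m)^2+2*(393/2500)*m*(1-m)+(1163/5000)*m^2) ≤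
      (1+m)*(2+m)*(cf 1 2 - cf m 2) := by
  have hy : 0 ≤ 1 - m := by linarith
  have e1 : cf 1 2 = 25/336 := by norm_num [cf, vf]
  have e2 : cf m 2 = (1+3/2*m)^2 / (6*(m+3)*(3/2*m+2)) := by
    simp only [cf, vf]; push_cast; field_simp; ring
  have hD : 0 < (6*(m+3)*(3/2*m+2)) := by positivity
  rw [e1, e2]
  have key : (1-m)*((58/625)*(1-m)^2+2*(393/2500)*m*(1-m)+(1163/5000)*m^2)*(6*(m+3)*(3/2*m+2)) ≤
      (1+m)*(2+m)*(25/336*(6*(m+3)*(3/2*m+2)) - (1+3/2*m)^2) := by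
    nlinarith [mul_nonneg (pow_nonneg h0 0) (pow_nonneg hy 5), mul_nonneg (pow_nonneg h0 1) (pow_nonneg hy 4), mul_nonneg (pow_nonneg h0 2) (pow_nonneg hy 3), mul_nonneg (pow_nonneg h0 3) (pow_nonneg hy 2), mul_nonneg (pow_nonneg h0 4) (pow_nonneg hy 1)]
  have e3 : (1+m)*(2+m)*(25/336 - (1+3/2*m)^2 / (6*(m+3)*(3/2*m+2))) =
      (1+m)*(2+m)*(25/336*(6*(m+3)*(3/2*m+2)) - (1+3/2*m)^2) / (6*(m+3)*(3/2*m+2)) := by field_simp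
  rw [e3]
  rw [le_div_iff₀ hD]; exact key

lemma cb4 (m : ℝ) (h0 : 0 ≤ m) (h1 : m ≤ 1) :
    (1+m)*(2+m)*(cf 1 3 - cf m 3) ≤
      (1-m)*((327/25000)*(1-m)^2+2*(123/5000)*m*(1-m)+(2087/50000)*m^2) := by
  have hy : 0 ≤ 1 - m := by linarith
  have e1 : cf 1 3 = 25/3024 := by norm_num [cf, vf]
  have e2 : cf m 3 = (1+3/2*m)^3 / (24*(m+4)*(3/2*m+2)*(3/2*m+3)) := by
    simp only [cf, vf]; push_cast; field_simp; ring
  have hD : 0 < (24*(m+4)*(3/2*m+2)*(3/2*m+3)) := by positivity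
  rw [e1, e2]
  have key : (1+m)*(2+m)*(25/3024*(24*(m+4)*(3/2*m+2)*(3/2*m+3)) - (1+3/2*m)^3) ≤
      (1-m)*((327/25000)*(1-m)^2+2*(123/5000)*m*(1-m)+(2087/50000)*m^2)*(24*(m+4)*(3/2*m+2)*(3/2*m+3)) := by
    nlinarith [mul_nonneg (pow_nonneg h0 0) (pow_nonneg hy 7), mul_nonneg (pow_nonneg h0 1) (pow_nonneg hy 6), mul_nonneg (pow_nonneg h0 2) (pow_nonneg hy 5), mul_nonneg (pow_nonneg h0 3) (pow_nonneg hy 4), mul_nonneg (pow_nonneg h0 4) (pow_nonneg hy 3), mul_nonneg (pow_nonneg h0 5) (pow_nonneg hy 2), mul_nonneg (pow_nonneg h0 6) (pow_nonneg hy 1)]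
  have e3 : (1+m)*(2+m)*(25/3024 - (1+3/2*m)^3 / (24*(m+4)*(3/2*m+2)*(3/2*m+3))) =
      (1+m)*(2+m)*(25/3024*(24*(m+4)*(3/2*m+2)*(3/2*m+3)) - (1+3/2*m)^3) / (24*(m+4)*(3/2*m+2)*(3/2*m+3)) := by field_simp
  rw [e3]
  rw [div_le_iff₀ hD]; exact key

lemma cb5 (m : ℝ) (h0 : 0 ≤ m) (h1 : m ≤ 1) :
    (1-m)*((11/10000)*(1-m)^2+2*(111/50000)*m*(1-m)+(449/100000)*m^2) ≤
      (1+m)*(2+m)*(cf 1 4 - cf m 4) := by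
  have hy : 0 ≤ 1 - m := by linarith
  have e1 : cf 1 4 = 125/199584 := by norm_num [cf, vf]
  have e2 : cf m 4 = (1+3/2*m)^4 / (120*(m+5)*(3/2*m+2)*(3/2*m+3)*(3/2*m+4)) := by
    simp only [cf, vf]; push_cast; field_simp; ring
  have hD : 0 < (120*(m+5)*(3/2*m+2)*(3/2*m+3)*(3/2*m+4)) := by positivity
  rw [e1, e2]
  have key : (1-m)*((11/10000)*(1-m)^2+2*(111/50000)*m*(1-m)+(449/100000)*m^2)*(120*(m+5)*(3/2*m+2)*(3/2*m+3)*(3/2*m+4)) ≤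
      (1+m)*(2+m)*(125/199584*(120*(m+5)*(3/2*m+2)*(3/2*m+3)*(3/2*m+4)) - (1+3/2*m)^4) := by
    nlinarith [mul_nonneg (pow_nonneg h0 0) (pow_nonneg hy 7), mul_nonneg (pow_nonneg h0 1) (pow_nonneg hy 6), mul_nonneg (pow_nonneg h0 2) (pow_nonneg hy 5), mul_nonneg (pow_nonneg h0 3) (pow_nonneg hy 4), mul_nonneg (pow_nonneg h0 4) (pow_nonneg hy 3), mul_nonneg (pow_nonneg h0 5) (pow_nonneg hy 2), mul_nonneg (pow_nonneg h0 6) (pow_nonneg hy 1)]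
  have e3 : (1+m)*(2+m)*(125/199584 - (1+3/2*m)^4 / (120*(m+5)*(3/2*m+2)*(3/2*m+3)*(3/2*m+4))) =
      (1+m)*(2+m)*(125/199584*(120*(m+5)*(3/2*m+2)*(3/2*m+3)*(3/2*m+4)) - (1+3/2*m)^4) / (120*(m+5)*(3/2*m+2)*(3/2*m+3)*(3/2*m+4)) := by field_simp
  rw [e3]
  rw [le_div_iff₀ hD]; exact key

lemma cb6 (m : ℝ) (h0 : 0 ≤ m) (h1 : m ≤ 1) :
    (1+m)*(2+m)*(cf 1 5 - cf m 5) ≤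
      (1-m)*((33/500000)*(1-m)^2+2*(67/500000)*m*(1-m)+(33/100000)*m^2) := by
  have hy : 0 ≤ 1 - m := by linarith
  have e1 : cf 1 5 = 625/18162144 := by norm_num [cf, vf]
  have e2 : cf m 5 = (1+3/2*m)^5 / (720*(m+6)*(3/2*m+2)*(3/2*m+3)*(3/2*m+4)*(3/2*m+5)) := by
    simp only [cf, vf]; push_cast; field_simp; ring
  have hD : 0 < (720*(m+6)*(3/2*m+2)*(3/2*m+3)*(3/2*m+4)*(3/2*m+5)) := by positivity
  rw [e1, e2]
  have key : (1+m)*(2+m)*(625/18162144*(720*(m+6)*(3/2*m+2)*(3/2*m+3)*(3/2*m+4)*(3/2*m+5)) - (1+3/2*m)^5) ≤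
      (1-m)*((33/500000)*(1-m)^2+2*(67/500000)*m*(1-m)+(33/100000)*m^2)*(720*(m+6)*(3/2*m+2)*(3/2*m+3)*(3/2*m+4)*(3/2*m+5)) := by
    nlinarith [mul_nonneg (pow_nonneg h0 0) (pow_nonneg hy 8), mul_nonneg (pow_nonneg h0 1) (pow_nonneg hy 7), mul_nonneg (pow_nonneg h0 2) (pow_nonneg hy 6), mul_nonneg (pow_nonneg h0 3) (pow_nonneg hy 5), mul_nonneg (pow_nonneg h0 4) (pow_nonneg hy 4), mul_nonneg (pow_nonneg h0 5) (pow_nonneg hy 3), mul_nonneg (pow_nonneg h0 6) (pow_nonneg hy 2), mul_nonneg (pow_nonneg h0 7) (pow_nonneg hy 1)]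
  have e3 : (1+m)*(2+m)*(625/18162144 - (1+3/2*m)^5 / (720*(m+6)*(3/2*m+2)*(3/2*m+3)*(3/2*m+4)*(3/2*m+5))) =
      (1+m)*(2+m)*(625/18162144*(720*(m+6)*(3/2*m+2)*(3/2*m+3)*(3/2*m+4)*(3/2*m+5)) - (1+3/2*m)^5) / (720*(m+6)*(3/2*m+2)*(3/2*m+3)*(3/2*m+4)*(3/2*m+5)) := by field_simp
  rw [e3]
  rw [div_le_iff₀ hD]; exact key

lemma cb7 (m : ℝ) (h0 : 0 ≤ m) (h1 : m ≤ 1) :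
    (1-m)*((27/10000000)*(1-m)^2+2*(53/10000000)*m*(1-m)+(21/1250000)*m^2) ≤
      (1+m)*(2+m)*(cf 1 6 - cf m 6) := by
  have hy : 0 ≤ 1 - m := by linarith
  have e1 : cf 1 6 = 625/435891456 := by norm_num [cf, vf]
  have e2 : cf m 6 = (1+3/2*m)^6 / (5040*(m+7)*(3/2*m+2)*(3/2*m+3)*(3/2*m+4)*(3/2*m+5)*(3/2*m+6)) := by
    simp only [cf, vf]; push_cast; field_simp; ring
  have hD : 0 < (5040*(m+7)*(3/2*m+2)*(3/2*m+3)*(3/2*m+4)*(3/2*m+5)*(3/2*m+6)) := by positivity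
  rw [e1, e2]
  have key : (1-m)*((27/10000000)*(1-m)^2+2*(53/10000000)*m*(1-m)+(21/1250000)*m^2)*(5040*(m+7)*(3/2*m+2)*(3/2*m+3)*(3/2*m+4)*(3/2*m+5)*(3/2*m+6)) ≤
      (1+m)*(2+m)*(625/435891456*(5040*(m+7)*(3/2*m+2)*(3/2*m+3)*(3/2*m+4)*(3/2*m+5)*(3/2*m+6)) - (1+3/2*m)^6) := by
    nlinarith [mul_nonneg (pow_nonneg h0 0) (pow_nonneg hy 9), mul_nonneg (pow_nonneg h0 1) (pow_nonneg hy 8), mul_nonneg (pow_nonneg h0 2) (pow_nonneg hy 7), mul_nonneg (pow_nonneg h0 3) (pow_nonneg hy 6), mul_nonneg (pow_nonneg h0 4) (pow_nonneg hy 5), mul_nonneg (pow_nonneg h0 5) (pow_nonneg hy 4), mul_nonneg (pow_nonneg h0 6) (pow_nonneg hy 3), mul_nonneg (pow_nonneg h0 7) (pow_nonneg hy 2), mul_nonneg (pow_nonneg h0 8) (pow_nonneg hy 1)]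
  have e3 : (1+m)*(2+m)*(625/435891456 - (1+3/2*m)^6 / (5040*(m+7)*(3/2*m+2)*(3/2*m+3)*(3/2*m+4)*(3/2*m+5)*(3/2*m+6))) =
      (1+m)*(2+m)*(625/435891456*(5040*(m+7)*(3/2*m+2)*(3/2*m+3)*(3/2*m+4)*(3/2*m+5)*(3/2*m+6)) - (1+3/2*m)^6) / (5040*(m+7)*(3/2*m+2)*(3/2*m+3)*(3/2*m+4)*(3/2*m+5)*(3/2*m+6)) := by field_simp
  rw [e3]
  rw [le_div_iff₀ hD]; exact key

lemma cb8 (m : ℝ) (h0 : 0 ≤ m) (h1 : m ≤ 1) :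
    (1+m)*(2+m)*(cf 1 7 - cf m 7) ≤
      (1-m)*((11/100000000)*(1-m)^2+2*(9/50000000)*m*(1-m)+(7/10000000)*m^2) := by
  have hy : 0 ≤ 1 - m := by linarith
  have e1 : cf 1 7 = 3125/66691392768 := by norm_num [cf, vf]
  have e2 : cf m 7 = (1+3/2*m)^7 / (40320*(m+8)*(3/2*m+2)*(3/2*m+3)*(3/2*m+4)*(3/2*m+5)*(3/2*m+6)*(3/2*m+7)) := by
    simp only [cf, vf]; push_cast; field_simp; ring
  have hD : 0 < (40320*(m+8)*(3/2*m+2)*(3/2*m+3)*(3/2*m+4)*(3/2*m+5)*(3/2*m+6)*(3/2*m+7)) := by positivity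
  rw [e1, e2]
  have key : (1+m)*(2+m)*(3125/66691392768*(40320*(m+8)*(3/2*m+2)*(3/2*m+3)*(3/2*m+4)*(3/2*m+5)*(3/2*m+6)*(3/2*m+7)) - (1+3/2*m)^7) ≤
      (1-m)*((11/100000000)*(1-m)^2+2*(9/50000000)*m*(1-m)+(7/10000000)*m^2)*(40320*(m+8)*(3/2*m+2)*(3/2*m+3)*(3/2*m+4)*(3/2*m+5)*(3/2*m+6)*(3/2*m+7)) := by
    nlinarith [mul_nonneg (pow_nonneg h0 0) (pow_nonneg hy 10), mul_nonneg (pow_nonneg h0 1) (pow_nonneg hy 9), mul_nonneg (pow_nonneg h0 2) (pow_nonneg hy 8), mul_nonneg (pow_nonneg h0 3) (pow_nonneg hy 7), mul_nonneg (pow_nonneg h0 4) (pow_nonneg hy 6), mul_nonneg (pow_nonneg h0 5) (pow_nonneg hy 5), mul_nonneg (pow_nonneg h0 6) (pow_nonneg hy 4), mul_nonneg (pow_nonneg h0 7) (pow_nonneg hy 3), mul_nonneg (pow_nonneg h0 8) (pow_nonneg hy 2), mul_nonneg (pow_nonneg h0 9) (pow_nonneg hy 1)]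
  have e3 : (1+m)*(2+m)*(3125/66691392768 - (1+3/2*m)^7 / (40320*(m+8)*(3/2*m+2)*(3/2*m+3)*(3/2*m+4)*(3/2*m+5)*(3/2*m+6)*(3/2*m+7))) =
      (1+m)*(2+m)*(3125/66691392768*(40320*(m+8)*(3/2*m+2)*(3/2*m+3)*(3/2*m+4)*(3/2*m+5)*(3/2*m+6)*(3/2*m+7)) - (1+3/2*m)^7) / (40320*(m+8)*(3/2*m+2)*(3/2*m+3)*(3/2*m+4)*(3/2*m+5)*(3/2*m+6)*(3/2*m+7)) := by field_simp
  rw [e3]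
  rw [div_le_iff₀ hD]; exact key

lemma cb1 (m : ℝ) (h0 : 0 ≤ m) :
    (1+m)*(2+m)*(cf 1 0 - cf m 0) = (1-m)*(1/2*(1-m)^2+2*(5/8)*m*(1-m)+3/4*m^2) := by
  have e1 : cf 1 0 = 5/4 := by norm_num [cf, vf]
  have e2 : cf m 0 = (1+3/2*m)/(m+1) := by simp only [cf, vf]; push_cast; ring
  rw [e1, e2]
  have : m + 1 ≠ 0 := by positivity
  field_simp; ring

lemma cb2 (m : ℝ) (h0 : 0 ≤ m) :
    (1+m)*(2+m)*(cf 1 1 - cf m 1) = (1-m)*(1/3*(1-m)^2+2*(1/2)*m*(1-m)+2/3*m^2) := by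
  have e1 : cf 1 1 = 5/12 := by norm_num [cf, vf]
  have e2 : cf m 1 = (1+3/2*m)/(2*(m+2)) := by
    simp only [cf, vf]; push_cast
    have : 3/2*m + 1 ≠ 0 := by positivity
    field_simp; ring
  rw [e1, e2]
  have : m + 2 ≠ 0 := by positivity
  field_simp; ring

lemma key_base (m s : ℝ) (h0 : 0 ≤ m) (h1 : m ≤ 1) (hs0 : 0 ≤ s) (hs1 : s ≤ 43/10) :
    ∑ i ∈ Finset.range 8, (-1:ℝ)^i * cf m i * s^(i+1) ≤
    ∑ i ∈ Finset.range 8, (-1:ℝ)^i * cf 1 i * s^(i+1) := by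
  have hy : 0 ≤ 1 - m := by linarith
  have c1 := cb1 m h0
  have c2 := cb2 m h0
  have c3 := mul_le_mul_of_nonneg_right (cb3 m h0 h1) (pow_nonneg hs0 3)
  have c4 := mul_le_mul_of_nonneg_right (cb4 m h0 h1) (pow_nonneg hs0 4)
  have c5 := mul_le_mul_of_nonneg_right (cb5 m h0 h1) (pow_nonneg hs0 5)
  have c6 := mul_le_mul_of_nonneg_right (cb6 m h0 h1) (pow_nonneg hs0 6)
  have c7 := mul_le_mul_of_nonneg_right (cb7 m h0 h1) (pow_nonneg hs0 7)
  have c8 := mul_le_mul_of_nonneg_right (cb8 m h0 h1) (pow_nonneg hs0 8)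
  have u0 := mul_nonneg (mul_nonneg (mul_nonneg hy (sq_nonneg (1-m))) hs0) (uni0 s hs0 hs1)
  have u1 := mul_nonneg (mul_nonneg (mul_nonneg hy (mul_nonneg h0 hy)) hs0) (uni1 s hs0 hs1)
  have u2 := mul_nonneg (mul_nonneg (mul_nonneg hy (sq_nonneg m)) hs0) (uni2 s hs0 hs1)
  have c1' := congrArg (· * s) c1
  have c2' := congrArg (· * s^2) c2
  have hp : 0 < (1+m)*(2+m) := by positivity
  refine le_of_mul_le_mul_left ?_ hp
  simp only [Finset.sum_range_succ, Finset.sum_range_zero]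
  generalize cf 1 0 = a0 at *
  generalize cf 1 1 = a1 at *
  generalize cf 1 2 = a2 at *
  generalize cf 1 3 = a3 at *
  generalize cf 1 4 = a4 at *
  generalize cf 1 5 = a5 at *
  generalize cf 1 6 = a6 at *
  generalize cf 1 7 = a7 at *
  linear_combination u0 + 2*u1 + u2 - c1' + c2' + c3 + c4 + c5 + c6 + c7 + c8

noncomputable def Rf (m : ℝ) (i : ℕ) : ℝ := (1+3/2*m)*(m+i+1)/((i+2)*(3/2*m+i+1)*(m+i+2))

lemma cf_succ (m : ℝ) (h0 : 0 ≤ m) (i : ℕ) : cf m (i+1) = cf m i * Rf m i := by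
  simp only [cf, vf, Rf]; push_cast
  have : m + i + 1 ≠ 0 := by positivity
  have : m + i + 2 ≠ 0 := by positivity
  have : 3/2*m + i + 1 ≠ 0 := by positivity
  field_simp; ring

lemma vf_pos (m : ℝ) (h0 : 0 ≤ m) (i : ℕ) : 0 < vf m i := by
  induction i with
  | zero => simp only [vf]; positivity
  | succ n ih => simp only [vf]; positivity

lemma cf_pos (m : ℝ) (h0 : 0 ≤ m) (i : ℕ) : 0 < cf m i := by
  have := vf_pos m h0 i
  unfold cf; positivity

lemma Rf_le (m : ℝ) (h0 : 0 ≤ m) (h1 : m ≤ 1) (i : ℕ) : Rf m i ≤ Rf 1 i := by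
  unfold Rf
  have hi : (0:ℝ) ≤ i := Nat.cast_nonneg i
  generalize (i:ℝ) = x at *
  have hy : 0 ≤ 1 - m := by linarith
  rw [div_le_div_iff₀ (by positivity) (by positivity)]
  rw [← sub_nonneg]
  have : 0 ≤ (1-m) * (x+2) * (x+2)*(8*x+16*m+16*x*m+12*m*x^2+8*x^2) := by positivity
  have h2 : (1+3/2*m)*(m+x+1)*((3/2*1+x+1)*(1+x+2)) ≤ (1+3/2*1)*(1+x+1)*((3/2*m+x+1)*(m+x+2)) := by
    have a1 : (1+3/2*m)*(3/2*1+x+1) ≤ (1+3/2*1)*(3/2*m+x+1) := by nlinarith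
    have a2 : (m+x+1)*(1+x+2) ≤ (1+x+1)*(m+x+2) := by nlinarith
    calc _ = ((1+3/2*m)*(3/2*1+x+1)) * ((m+x+1)*(1+x+2)) := by ring
      _ ≤ ((1+3/2*1)*(3/2*m+x+1)) * ((1+x+1)*(m+x+2)) := by gcongr
      _ = _ := by ring
  have hx : 0 ≤ x + 2 := by positivity
  nlinarith [mul_le_mul_of_nonneg_left h2 hx]

lemma Rf_nonneg (m : ℝ) (h0 : 0 ≤ m) (i : ℕ) : 0 ≤ Rf m i := by unfold Rf; positivity

lemma cf_theta (m : ℝ) (h0 : 0 ≤ m) (h1 : m ≤ 1) (i : ℕ) (hi : 8 ≤ i) :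
    cf m i ≤ (1+3/2*m)/(5/2) * cf 1 i := by
  induction i, hi using Nat.le_induction with
  | base =>
    have e1 : cf 1 8 = 3*10^9/(Nat.factorial 20 : ℝ) := by norm_num [cf, vf, Nat.factorial]
    have e2 : cf m 8 = (1+3/2*m)^8 / (362880*(m+9)*(3/2*m+2)*(3/2*m+3)*(3/2*m+4)*(3/2*m+5)*(3/2*m+6)*(3/2*m+7)*(3/2*m+8)) := by
      simp only [cf, vf]; push_cast; field_simp; ring
    have hy : 0 ≤ 1 - m := by linarith
    have h3 : (1+3/2*m)^7 ≤ 2/5*(3*10^9/2432902008176640000*(362880*(m+9)*(3/2*m+2)*(3/2*m+3)*(3/2*m+4)*(3/2*m+5)*(3/2*m+6)*(3/2*m+7)*(3/2*m+8))) := by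
      nlinarith [mul_nonneg (pow_nonneg h0 0) (pow_nonneg hy 8), mul_nonneg (pow_nonneg h0 1) (pow_nonneg hy 7), mul_nonneg (pow_nonneg h0 2) (pow_nonneg hy 6), mul_nonneg (pow_nonneg h0 3) (pow_nonneg hy 5), mul_nonneg (pow_nonneg h0 4) (pow_nonneg hy 4), mul_nonneg (pow_nonneg h0 5) (pow_nonneg hy 3), mul_nonneg (pow_nonneg h0 6) (pow_nonneg hy 2), mul_nonneg (pow_nonneg h0 7) (pow_nonneg hy 1), mul_nonneg (pow_nonneg h0 8) (pow_nonneg hy 0)]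
    have e3 : (Nat.factorial 20 : ℝ) = 2432902008176640000 := by norm_num [Nat.factorial]
    rw [e1, e2, e3, div_le_iff₀ (by positivity)]
    have hp : 0 ≤ 1+3/2*m := by positivity
    have h4 := mul_le_mul_of_nonneg_left h3 hp
    linarith
  | succ n hn ih =>
    rw [cf_succ m h0, cf_succ 1 zero_le_one]
    have := Rf_le m h0 h1 n
    have h2 := Rf_nonneg m h0 n
    have h3 := cf_pos 1 zero_le_one n
    calc cf m n * Rf m n ≤ ((1+3/2*m)/(5/2) * cf 1 n) * Rf 1 n := by gcongr
      _ = _ := by ring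

lemma Rf_theta (m s : ℝ) (h0 : 0 ≤ m) (h1 : m ≤ 1) (hs0 : 0 ≤ s) (hs1 : s ≤ 43/10) (i : ℕ) (hi : 8 ≤ i) :
    (1+3/2*m)/(5/2) * (1 - s * Rf m i) ≤ 1 - s * Rf 1 i := by
  have hi' : (8:ℝ) ≤ i := by exact_mod_cast hi
  have hR1 : Rf 1 i = (5/2)/((i+5/2)*(i+3)) := by
    unfold Rf
    have : (i:ℝ)+2 ≠ 0 := by positivity
    field_simp; ring
  have hR1' : Rf 1 i ≤ 1/40 := by
    rw [hR1, div_le_div_iff₀ (by positivity) (by norm_num)]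
    nlinarith
  have hRm : (1+3/2*m)/(5/2) * m * Rf 1 i ≤ Rf m i := by
    rw [hR1]
    unfold Rf
    generalize (i:ℝ) = x at *
    have hx : 0 ≤ x := by linarith
    have e : (1+3/2*m)/(5/2) * m * ((5/2)/((x+5/2)*(x+3))) = (1+3/2*m) * m /((x+5/2)*(x+3)) := by
      field_simp
    rw [e, div_le_div_iff₀ (by positivity) (by positivity)]
    have a1 : m*((x+2)*(m+x+2)) ≤ (m+x+1)*(x+3) := by
      have hy : 0 ≤ 1 - m := by linarith
      have : 0 ≤ (1-m)*((x+2)*(x+2+m)-1) := mul_nonneg hy (by nlinarith [mul_nonneg hx h0])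
      nlinarith
    have a2 : 3/2*m+x+1 ≤ x+5/2 := by linarith
    calc _ = (1+3/2*m)*((m*((x+2)*(m+x+2)))*(3/2*m+x+1)) := by ring
      _ ≤ (1+3/2*m)*(((m+x+1)*(x+3))*(x+5/2)) := by gcongr
      _ = _ := by ring
  have hth : 0 ≤ (1+3/2*m)/(5/2) := by positivity
  have h3 := mul_le_mul_of_nonneg_left hRm hth
  have h4 : 1 - 22/10*(1-m) ≤ (1+3/2*m)/(5/2)*((1+3/2*m)/(5/2)*m) := by
    nlinarith [mul_nonneg h0 (sq_nonneg (1-m)), sq_nonneg (1-m)]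
  have hn := Rf_nonneg 1 zero_le_one i
  have h5 := mul_le_mul_of_nonneg_right h4 hn
  have h6 : Rf 1 i - (1+3/2*m)/(5/2) * Rf m i ≤ 22/10*(1-m)/40 := by
    have : 22/10*(1-m)* Rf 1 i ≤ 22/10*(1-m)*(1/40) := mul_le_mul_of_nonneg_left hR1' (by linarith)
    linarith
  have h7 := mul_le_mul_of_nonneg_left h6 hs0
  have h8 : s * (22/10*(1-m)/40) ≤ 43/10 * (22/10*(1-m)/40) := mul_le_mul_of_nonneg_right hs1 (by linarith)
  linarith

lemma key_fin (m s : ℝ) (h0 : 0 ≤ m) (h1 : m ≤ 1) (hs0 : 0 ≤ s) (hs1 : s ≤ 43/10) (n : ℕ) :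
    ∑ i ∈ Finset.range (2*(n+4)), (-1:ℝ)^i * cf m i * s^(i+1) ≤
    ∑ i ∈ Finset.range (2*(n+4)), (-1:ℝ)^i * cf 1 i * s^(i+1) := by
  induction n with
  | zero => exact key_base m s h0 h1 hs0 hs1
  | succ n ih =>
    have e : 2*(n+1+4) = 2*(n+4)+1+1 := by ring
    rw [e, Finset.sum_range_succ, Finset.sum_range_succ, Finset.sum_range_succ _ (2*(n+4)+1),
      Finset.sum_range_succ _ (2*(n+4))]
    set N := 2*(n+4) with hN
    have hN8 : 8 ≤ N := by omega
    have p1 : (-1:ℝ)^N = 1 := by rw [hN, pow_mul]; norm_num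
    rw [pow_succ (-1:ℝ) N, p1, cf_succ m h0, cf_succ 1 zero_le_one]
    have a1 := cf_theta m h0 h1 N hN8
    have a2 := Rf_theta m s h0 h1 hs0 hs1 N hN8
    have hc := cf_pos 1 zero_le_one N
    have hR1' : Rf 1 N ≤ 1/40 := by
      have hi' : (8:ℝ) ≤ N := by exact_mod_cast hN8
      unfold Rf
      rw [div_le_div_iff₀ (by positivity) (by norm_num)]
      nlinarith [mul_nonneg (sub_nonneg.2 hi') (sub_nonneg.2 hi'), mul_nonneg (mul_nonneg (sub_nonneg.2 hi') (sub_nonneg.2 hi')) (sub_nonneg.2 hi')]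
    have hR := Rf_le m h0 h1 N
    have hRn := Rf_nonneg m h0 N
    have a3 : 0 ≤ 1 - s * Rf m N := by nlinarith
    have a4 : cf m N * (1 - s * Rf m N) ≤ cf 1 N * (1 - s * Rf 1 N) := by
      calc _ ≤ ((1+3/2*m)/(5/2) * cf 1 N) * (1 - s * Rf m N) := by gcongr
        _ = cf 1 N * ((1+3/2*m)/(5/2) * (1 - s * Rf m N)) := by ring
        _ ≤ _ := by gcongr
    have a5 := mul_le_mul_of_nonneg_right a4 (pow_nonneg hs0 (N+1))
    have q1 : s^(N+1+1) = s * s^(N+1) := by ring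
    rw [q1]
    linarith

lemma cf_one (n : ℕ) : cf 1 n = 3*10^(n+1)/(Nat.factorial (2*n+4) : ℝ) := by
  induction n with
  | zero => norm_num [cf, vf, Nat.factorial]
  | succ n ih =>
    rw [cf_succ 1 zero_le_one, ih]
    have : 2*(n+1)+4 = (2*n+4)+1+1 := by ring
    rw [this, Nat.factorial_succ (2*n+4+1), Nat.factorial_succ (2*n+4)]
    unfold Rf
    have : ((2*n+4).factorial : ℝ) ≠ 0 := by positivity
    push_cast
    generalize ((2*n+4).factorial : ℝ) = f at *
    field_simp; ring

lemma HasSum.congr_fun' {f g : ℕ → ℝ} {a : ℝ} (h : HasSum f a) (he : ∀ i, g i = f i) : HasSum g a := by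
  have : g = f := funext he
  rw [this]; exact h

lemma key_one (s : ℝ) (hs0 : 0 < s) :
    ∃ W : ℝ, HasSum (fun i : ℕ => (-1:ℝ)^i * cf 1 i * s^(i+1)) W ∧ W ≤ 3/2 := by
  have hx : 0 < 10*s := by positivity
  have h := Real.hasSum_cos (√(10*s))
  have h2 := (hasSum_nat_add_iff' (f := fun n : ℕ => (-1:ℝ)^n * (√(10*s))^(2*n)/((2*n).factorial:ℝ)) 2).2 h
  have h3 := h2.mul_left (3/(10*s))
  refine ⟨3 / (10 * s) * (cos √(10 * s) - ∑ i ∈ Finset.range 2, (-1) ^ i * √(10 * s) ^ (2 * i) / ((2 * i).factorial:ℝ)), ?_, ?_⟩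
  · refine HasSum.congr_fun' h3 fun i => ?_
    rw [cf_one, pow_mul, Real.sq_sqrt hx.le]
    have : 2*(i+2) = 2*i+4 := by ring
    rw [this]
    have : ((2*i+4).factorial : ℝ) ≠ 0 := by positivity
    rw [mul_pow]
    field_simp; ring
  · simp only [Finset.sum_range_succ, Finset.sum_range_zero]
    have e : √(10*s)^(2*1) = 10*s := by rw [mul_one, Real.sq_sqrt hx.le]
    rw [e, div_mul_eq_mul_div, div_le_iff₀ hx]
    have := Real.cos_le_one (√(10*s))
    norm_num [Nat.factorial, -Real.sqrt_mul', -Real.sqrt_mul]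
    linarith

lemma key_lim (m s W : ℝ) (h0 : 0 ≤ m) (h1 : m ≤ 1) (hs0 : 0 < s) (hs1 : s ≤ 43/10)
    (hW : HasSum (fun i : ℕ => (-1:ℝ)^i * cf m i * s^(i+1)) W) : W ≤ 3/2 := by
  obtain ⟨W1, hW1, hle⟩ := key_one s hs0
  refine le_trans ?_ hle
  have ht : Filter.Tendsto (fun n : ℕ => 2*(n+4)) Filter.atTop Filter.atTop :=
    Filter.tendsto_atTop_mono (fun n => by simp only [id]; omega) Filter.tendsto_id
  exact le_of_tendsto_of_tendsto' (hW.tendsto_sum_nat.comp ht) (hW1.tendsto_sum_nat.comp ht)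
    (fun n => key_fin m s h0 h1 hs0.le hs1 n)

lemma alt_bounds (f : ℕ → ℝ) (S : ℝ) (h : HasSum (fun i => (-1:ℝ)^i * f i) S) (hf : ∀ i, 2 ≤ i → f (i+1) ≤ f i)
    (M : ℕ) (hM : 2 ≤ M) :
    ∑ i ∈ Finset.range (2*M), (-1:ℝ)^i * f i ≤ S ∧ S ≤ ∑ i ∈ Finset.range (2*M+1), (-1:ℝ)^i * f i := by
  have h2 := (hasSum_nat_add_iff' (f := fun i => (-1:ℝ)^i * f i) (2*M)).2 h
  have ha : Antitone (fun i => f (i + 2*M)) := antitone_nat_of_succ_le fun i => by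
    have := hf (i+2*M) (by omega)
    have e : i + 1 + 2*M = i + 2*M + 1 := by ring
    rw [e]; exact this
  have h3 : HasSum (fun i => (-1:ℝ)^i * f (i+2*M)) (S - ∑ i ∈ Finset.range (2*M), (-1:ℝ)^i * f i) := by
    refine HasSum.congr_fun' h2 fun i => ?_
    rw [pow_add, pow_mul]; norm_num
  have b1 := ha.alternating_series_le_tendsto h3.tendsto_sum_nat 0
  have b2 := ha.tendsto_le_alternating_series h3.tendsto_sum_nat 0
  rw [Finset.sum_range_succ]
  have e : (-1:ℝ)^(2*M) = 1 := by rw [pow_mul]; norm_num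
  rw [e]
  simp at b1 b2
  constructor <;> linarith

lemma vf_dec (m s : ℝ) (h0 : 0 ≤ m) (h1 : m ≤ 1) (hs0 : 0 ≤ s) (hs1 : s ≤ 43/10) (i : ℕ) (hi : 2 ≤ i) :
    vf m (i+1) * s^(i+1+1) ≤ vf m i * s^(i+1) := by
  have hv := vf_pos m h0 i
  have hi' : (2:ℝ) ≤ i := by exact_mod_cast hi
  have : (1+3/2*m) / ((i+2)*(3/2*m+i+1)) * s ≤ 1 := by
    rw [div_mul_eq_mul_div, div_le_one (by positivity)]
    have : (1+3/2*m)*s ≤ (1+3/2*m)*(43/10) := by gcongr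
    nlinarith [mul_nonneg h0 (sub_nonneg.2 hi')]
  have h3 : 0 ≤ vf m i * s^(i+1) := by positivity
  calc vf m (i+1) * s^(i+1+1) = (vf m i * s^(i+1)) * ((1+3/2*m) / ((i+2)*(3/2*m+i+1)) * s) := by
        simp only [vf]; ring
    _ ≤ _ := mul_le_of_le_one_right h3 this

lemma vf_e2 (m : ℝ) (h0 : 0 ≤ m) : vf m 2 = (1+3/2*m)^2/(6*((3/2*m+2))) := by
  simp only [vf]; push_cast; field_simp; ring
lemma vf_e3 (m : ℝ) (h0 : 0 ≤ m) : vf m 3 = (1+3/2*m)^3/(24*((3/2*m+2)*(3/2*m+3))) := by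
  simp only [vf]; push_cast; field_simp; ring
lemma vf_e4 (m : ℝ) (h0 : 0 ≤ m) : vf m 4 = (1+3/2*m)^4/(120*((3/2*m+2)*(3/2*m+3)*(3/2*m+4))) := by
  simp only [vf]; push_cast; field_simp; ring
lemma vf_e5 (m : ℝ) (h0 : 0 ≤ m) : vf m 5 = (1+3/2*m)^5/(720*((3/2*m+2)*(3/2*m+3)*(3/2*m+4)*(3/2*m+5))) := by
  simp only [vf]; push_cast; field_simp; ring
lemma vf_e6 (m : ℝ) (h0 : 0 ≤ m) : vf m 6 = (1+3/2*m)^6/(5040*((3/2*m+2)*(3/2*m+3)*(3/2*m+4)*(3/2*m+5)*(3/2*m+6))) := by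
  simp only [vf]; push_cast; field_simp; ring
lemma vf_e7 (m : ℝ) (h0 : 0 ≤ m) : vf m 7 = (1+3/2*m)^7/(40320*((3/2*m+2)*(3/2*m+3)*(3/2*m+4)*(3/2*m+5)*(3/2*m+6)*(3/2*m+7))) := by
  simp only [vf]; push_cast; field_simp; ring
lemma vf_e8 (m : ℝ) (h0 : 0 ≤ m) : vf m 8 = (1+3/2*m)^8/(362880*((3/2*m+2)*(3/2*m+3)*(3/2*m+4)*(3/2*m+5)*(3/2*m+6)*(3/2*m+7)*(3/2*m+8))) := by
  simp only [vf]; push_cast; field_simp; ring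

lemma V_two (m S : ℝ) (h0 : 0 ≤ m) (h1 : m ≤ 1)
    (h : HasSum (fun i => (-1:ℝ)^i * (vf m i * (2)^(i+1))) S) : 3/2*m < S := by
  have hy : 0 ≤ 1 - m := by linarith
  have hb := (alt_bounds _ S h (vf_dec m (2) h0 h1 (by norm_num) (by norm_num)) 2 (by norm_num)).1
  have e0 : vf m 0 = 1 + 3/2*m := rfl
  have e1 : vf m 1 = (1+3/2*m)/2 := by simp only [vf]; push_cast; field_simp; ring
  simp only [Finset.sum_range_succ, Finset.sum_range_zero, Nat.reduceMul, e0, e1, vf_e2 m h0, vf_e3 m h0] at hb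
  have hD : 0 < (3/2*m+2)*(3/2*m+3) := by positivity
  have p2 : (1+3/2*m)^2/(6*((3/2*m+2))) = (1+3/2*m)^2*((3/2*m+3))/6 / ((3/2*m+2)*(3/2*m+3)) := by
    field_simp
  have p3 : (1+3/2*m)^3/(24*((3/2*m+2)*(3/2*m+3))) = (1+3/2*m)^3*(1)/24 / ((3/2*m+2)*(3/2*m+3)) := by
    field_simp
  rw [p2, p3] at hb
  set D := (3/2*m+2)*(3/2*m+3) with hDd
  have key : 3/2*m*D < (1+3/2*m)*(2)*D - (1+3/2*m)/2*(2)^2*D + (1+3/2*m)^2*((3/2*m+3))/6*(2)^3 - (1+3/2*m)^3*(1)/24*(2)^4 := by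
    rw [hDd]
    nlinarith [mul_nonneg (pow_nonneg h0 0) (pow_nonneg hy 4), mul_nonneg (pow_nonneg h0 1) (pow_nonneg hy 3), mul_nonneg (pow_nonneg h0 2) (pow_nonneg hy 2), mul_nonneg (pow_nonneg h0 3) (pow_nonneg hy 1), mul_nonneg (pow_nonneg h0 4) (pow_nonneg hy 0)]
  have key2 : (1+3/2*m)*(2)*D - (1+3/2*m)/2*(2)^2*D + (1+3/2*m)^2*((3/2*m+3))/6*(2)^3 - (1+3/2*m)^3*(1)/24*(2)^4 = ((1+3/2*m)*(2)*D - (1+3/2*m)/2*(2)^2*D + (1+3/2*m)^2*((3/2*m+3))/6*(2)^3 - (1+3/2*m)^3*(1)/24*(2)^4) / D * D := by field_simp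
  rw [key2] at key
  have key3 := lt_of_mul_lt_mul_right key hD.le
  refine lt_of_lt_of_le (lt_of_lt_of_eq key3 ?_) hb
  field_simp
  ring

lemma V_four (m S : ℝ) (h0 : 0 ≤ m) (h1 : m ≤ 1)
    (h : HasSum (fun i => (-1:ℝ)^i * (vf m i * (43/10)^(i+1))) S) : S < 3/2*m := by
  have hy : 0 ≤ 1 - m := by linarith
  have hb := (alt_bounds _ S h (vf_dec m (43/10) h0 h1 (by norm_num) (by norm_num)) 4 (by norm_num)).2
  have e0 : vf m 0 = 1 + 3/2*m := rfl
  have e1 : vf m 1 = (1+3/2*m)/2 := by simp only [vf]; push_cast; field_simp; ring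
  simp only [Finset.sum_range_succ, Finset.sum_range_zero, Nat.reduceMul, e0, e1, vf_e2 m h0, vf_e3 m h0, vf_e4 m h0, vf_e5 m h0, vf_e6 m h0, vf_e7 m h0, vf_e8 m h0] at hb
  have hD : 0 < (3/2*m+2)*(3/2*m+3)*(3/2*m+4)*(3/2*m+5)*(3/2*m+6)*(3/2*m+7)*(3/2*m+8) := by positivity
  have p2 : (1+3/2*m)^2/(6*((3/2*m+2))) = (1+3/2*m)^2*((3/2*m+3)*(3/2*m+4)*(3/2*m+5)*(3/2*m+6)*(3/2*m+7)*(3/2*m+8))/6 / ((3/2*m+2)*(3/2*m+3)*(3/2*m+4)*(3/2*m+5)*(3/2*m+6)*(3/2*m+7)*(3/2*m+8)) := by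
    field_simp
  have p3 : (1+3/2*m)^3/(24*((3/2*m+2)*(3/2*m+3))) = (1+3/2*m)^3*((3/2*m+4)*(3/2*m+5)*(3/2*m+6)*(3/2*m+7)*(3/2*m+8))/24 / ((3/2*m+2)*(3/2*m+3)*(3/2*m+4)*(3/2*m+5)*(3/2*m+6)*(3/2*m+7)*(3/2*m+8)) := by
    field_simp
  have p4 : (1+3/2*m)^4/(120*((3/2*m+2)*(3/2*m+3)*(3/2*m+4))) = (1+3/2*m)^4*((3/2*m+5)*(3/2*m+6)*(3/2*m+7)*(3/2*m+8))/120 / ((3/2*m+2)*(3/2*m+3)*(3/2*m+4)*(3/2*m+5)*(3/2*m+6)*(3/2*m+7)*(3/2*m+8)) := by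
    field_simp
  have p5 : (1+3/2*m)^5/(720*((3/2*m+2)*(3/2*m+3)*(3/2*m+4)*(3/2*m+5))) = (1+3/2*m)^5*((3/2*m+6)*(3/2*m+7)*(3/2*m+8))/720 / ((3/2*m+2)*(3/2*m+3)*(3/2*m+4)*(3/2*m+5)*(3/2*m+6)*(3/2*m+7)*(3/2*m+8)) := by
    field_simp
  have p6 : (1+3/2*m)^6/(5040*((3/2*m+2)*(3/2*m+3)*(3/2*m+4)*(3/2*m+5)*(3/2*m+6))) = (1+3/2*m)^6*((3/2*m+7)*(3/2*m+8))/5040 / ((3/2*m+2)*(3/2*m+3)*(3/2*m+4)*(3/2*m+5)*(3/2*m+6)*(3/2*m+7)*(3/2*m+8)) := by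
    field_simp
  have p7 : (1+3/2*m)^7/(40320*((3/2*m+2)*(3/2*m+3)*(3/2*m+4)*(3/2*m+5)*(3/2*m+6)*(3/2*m+7))) = (1+3/2*m)^7*((3/2*m+8))/40320 / ((3/2*m+2)*(3/2*m+3)*(3/2*m+4)*(3/2*m+5)*(3/2*m+6)*(3/2*m+7)*(3/2*m+8)) := by
    field_simp
  have p8 : (1+3/2*m)^8/(362880*((3/2*m+2)*(3/2*m+3)*(3/2*m+4)*(3/2*m+5)*(3/2*m+6)*(3/2*m+7)*(3/2*m+8))) = (1+3/2*m)^8*(1)/362880 / ((3/2*m+2)*(3/2*m+3)*(3/2*m+4)*(3/2*m+5)*(3/2*m+6)*(3/2*m+7)*(3/2*m+8)) := by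
    field_simp
  rw [p2, p3, p4, p5, p6, p7, p8] at hb
  set D := (3/2*m+2)*(3/2*m+3)*(3/2*m+4)*(3/2*m+5)*(3/2*m+6)*(3/2*m+7)*(3/2*m+8) with hDd
  have key : (1+3/2*m)*(43/10)*D - (1+3/2*m)/2*(43/10)^2*D + (1+3/2*m)^2*((3/2*m+3)*(3/2*m+4)*(3/2*m+5)*(3/2*m+6)*(3/2*m+7)*(3/2*m+8))/6*(43/10)^3 - (1+3/2*m)^3*((3/2*m+4)*(3/2*m+5)*(3/2*m+6)*(3/2*m+7)*(3/2*m+8))/24*(43/10)^4 + (1+3/2*m)^4*((3/2*m+5)*(3/2*m+6)*(3/2*m+7)*(3/2*m+8))/120*(43/10)^5 - (1+3/2*m)^5*((3/2*m+6)*(3/2*m+7)*(3/2*m+8))/720*(43/10)^6 + (1+3/2*m)^6*((3/2*m+7)*(3/2*m+8))/5040*(43/10)^7 - (1+3/2*m)^7*((3/2*m+8))/40320*(43/10)^8 + (1+3/2*m)^8*(1)/362880*(43/10)^9 < 3/2*m*D := by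
    rw [hDd]
    nlinarith [mul_nonneg (pow_nonneg h0 0) (pow_nonneg hy 9), mul_nonneg (pow_nonneg h0 1) (pow_nonneg hy 8), mul_nonneg (pow_nonneg h0 2) (pow_nonneg hy 7), mul_nonneg (pow_nonneg h0 3) (pow_nonneg hy 6), mul_nonneg (pow_nonneg h0 4) (pow_nonneg hy 5), mul_nonneg (pow_nonneg h0 5) (pow_nonneg hy 4), mul_nonneg (pow_nonneg h0 6) (pow_nonneg hy 3), mul_nonneg (pow_nonneg h0 7) (pow_nonneg hy 2), mul_nonneg (pow_nonneg h0 8) (pow_nonneg hy 1), mul_nonneg (pow_nonneg h0 9) (pow_nonneg hy 0)]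
  have key2 : (1+3/2*m)*(43/10)*D - (1+3/2*m)/2*(43/10)^2*D + (1+3/2*m)^2*((3/2*m+3)*(3/2*m+4)*(3/2*m+5)*(3/2*m+6)*(3/2*m+7)*(3/2*m+8))/6*(43/10)^3 - (1+3/2*m)^3*((3/2*m+4)*(3/2*m+5)*(3/2*m+6)*(3/2*m+7)*(3/2*m+8))/24*(43/10)^4 + (1+3/2*m)^4*((3/2*m+5)*(3/2*m+6)*(3/2*m+7)*(3/2*m+8))/120*(43/10)^5 - (1+3/2*m)^5*((3/2*m+6)*(3/2*m+7)*(3/2*m+8))/720*(43/10)^6 + (1+3/2*m)^6*((3/2*m+7)*(3/2*m+8))/5040*(43/10)^7 - (1+3/2*m)^7*((3/2*m+8))/40320*(43/10)^8 + (1+3/2*m)^8*(1)/362880*(43/10)^9 = ((1+3/2*m)*(43/10)*D - (1+3/2*m)/2*(43/10)^2*D + (1+3/2*m)^2*((3/2*m+3)*(3/2*m+4)*(3/2*m+5)*(3/2*m+6)*(3/2*m+7)*(3/2*m+8))/6*(43/10)^3 - (1+3/2*m)^3*((3/2*m+4)*(3/2*m+5)*(3/2*m+6)*(3/2*m+7)*(3/2*m+8))/24*(43/10)^4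 + (1+3/2*m)^4*((3/2*m+5)*(3/2*m+6)*(3/2*m+7)*(3/2*m+8))/120*(43/10)^5 - (1+3/2*m)^5*((3/2*m+6)*(3/2*m+7)*(3/2*m+8))/720*(43/10)^6 + (1+3/2*m)^6*((3/2*m+7)*(3/2*m+8))/5040*(43/10)^7 - (1+3/2*m)^7*((3/2*m+8))/40320*(43/10)^8 + (1+3/2*m)^8*(1)/362880*(43/10)^9) / D * D := by field_simp
  rw [key2] at key
  have key3 := lt_of_mul_lt_mul_right key hD.le
  refine lt_of_le_of_lt hb (lt_of_eq_of_lt ?_ key3)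
  field_simp
  ring

noncomputable def bc (α : ℝ) (k : ℕ) : ℝ := (-1 : ℝ) ^ k / ((k.factorial : ℝ) * Real.Gamma (α + k + 1))

noncomputable def bY (α z : ℝ) : ℝ := ∑' k : ℕ, bc α k * z ^ k

lemma gam_pos (α : ℝ) (hα : -1 < α) (k : ℕ) : 0 < Real.Gamma (α + k + 1) := by
  have : (0:ℝ) ≤ k := Nat.cast_nonneg k
  exact Real.Gamma_pos_of_pos (by linarith)

lemma gam_succ (α : ℝ) (hα : -1 < α) (k : ℕ) :
    Real.Gamma (α + (k+1:ℕ) + 1) = (α + k + 1) * Real.Gamma (α + k + 1) := by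
  have : (0:ℝ) ≤ k := Nat.cast_nonneg k
  have e : α + (k+1:ℕ) + 1 = (α + k + 1) + 1 := by push_cast; ring
  rw [e, Real.Gamma_add_one (by linarith)]

lemma bc_zero_pos (α : ℝ) (hα : -1 < α) : 0 < bc α 0 := by
  have := gam_pos α hα 0
  unfold bc
  simp at this ⊢
  exact this

lemma bc_succ (α : ℝ) (hα : -1 < α) (k : ℕ) :
    bc α (k+1) = - bc α k / ((k+1)*(α+k+1)) := by
  have h := gam_pos α hα k
  have : (0:ℝ) ≤ k := Nat.cast_nonneg k
  have h2 : 0 < α + k + 1 := by linarith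
  unfold bc
  rw [gam_succ α hα, Nat.factorial_succ]
  have h3 : (k.factorial : ℝ) ≠ 0 := by positivity
  push_cast
  field_simp
  ring

lemma bc_bound (α : ℝ) (hα : -1 < α) : ∃ C : ℝ, 0 ≤ C ∧ ∀ k : ℕ, |bc α k| ≤ C / k.factorial := by
  have g0 := gam_pos α hα 0
  have g1 := gam_pos α hα 1
  set d := min (Real.Gamma (α + (0:ℕ) + 1)) (Real.Gamma (α + (1:ℕ) + 1)) with hd
  have hdp : 0 < d := lt_min g0 g1
  have hk : ∀ k : ℕ, d ≤ Real.Gamma (α + (k+1:ℕ) + 1) := by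
    intro k
    induction k with
    | zero => exact min_le_right _ _
    | succ n ih =>
      rw [gam_succ α hα (n+1)]
      have := gam_pos α hα (n+1)
      have : (0:ℝ) ≤ n := Nat.cast_nonneg n
      have h1 : 1 ≤ α + (n+1:ℕ) + 1 := by push_cast; linarith
      nlinarith
  refine ⟨d⁻¹, by positivity, fun k => ?_⟩
  have hk' : d ≤ Real.Gamma (α + k + 1) := by
    cases k with
    | zero => exact min_le_left _ _
    | succ n => exact hk n
  have hg := gam_pos α hα k
  have hf : (0:ℝ) < k.factorial := by positivity
  unfold bc
  rw [abs_div, abs_pow, abs_neg, abs_one, one_pow, abs_of_pos (by positivity), ← one_div, div_div,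
    mul_comm d]
  gcongr

lemma bc_summable (α : ℝ) (hα : -1 < α) (z : ℝ) : Summable (fun k => |bc α k| * |z|^k) := by
  obtain ⟨C, hC, h⟩ := bc_bound α hα
  refine Summable.of_nonneg_of_le (fun k => by positivity) (fun k => ?_)
    ((Real.summable_pow_div_factorial |z|).mul_left C)
  calc |bc α k| * |z|^k ≤ C / k.factorial * |z|^k := by gcongr; exact h k
    _ = _ := by ring

lemma bY_hasSum (α : ℝ) (hα : -1 < α) (z : ℝ) : HasSum (fun k => bc α k * z^k) (bY α z) := by
  refine Summable.hasSum ?_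
  refine Summable.of_norm ?_
  refine (bc_summable α hα z).congr fun k => ?_
  rw [Real.norm_eq_abs, abs_mul, abs_pow]

lemma bY_deriv (α : ℝ) (hα : -1 < α) (z : ℝ) : HasDerivAt (bY α) (- bY (α+1) z) z := by
  set R := |z| + 1 with hR
  have hRp : 0 < R := by positivity
  obtain ⟨C, hC, h⟩ := bc_bound α hα
  set u : ℕ → ℝ := fun n => |bc α n| * (n * R^(n-1)) with hu
  have hus : Summable u := by
    rw [← summable_nat_add_iff 1]
    refine Summable.of_nonneg_of_le (fun k => by positivity) (fun k => ?_)
      ((Real.summable_pow_div_factorial R).mul_left C)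
    simp only [hu]
    have := h (k+1)
    calc |bc α (k+1)| * ((k+1:ℕ) * R^(k+1-1)) ≤ C / (k+1).factorial * ((k+1:ℕ) * R^(k+1-1)) := by gcongr
      _ = _ := by
        rw [Nat.factorial_succ]; push_cast
        have : (k.factorial:ℝ) ≠ 0 := by positivity
        field_simp
  have key := hasDerivAt_tsum_of_isPreconnected (g := fun n y => bc α n * y^n)
    (g' := fun n y => bc α n * (n * y^(n-1))) (t := Metric.ball (0:ℝ) R) (y₀ := z) (y := z) hus
    Metric.isOpen_ball (convex_ball _ _).isPreconnected
    (fun n y _ => (hasDerivAt_pow n y).const_mul _)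
    (fun n y hy => by
      rw [Metric.mem_ball, dist_zero_right, Real.norm_eq_abs] at hy
      rw [Real.norm_eq_abs, abs_mul, abs_mul, abs_pow, Nat.abs_cast]
      simp only [hu]
      gcongr)
    (by simp [hR]) (bY_hasSum α hα z).summable (by simp [hR])
  have e : ∑' n, bc α n * (n * z^(n-1)) = - bY (α+1) z := by
    have h1 := (bY_hasSum (α+1) (by linarith) z).neg
    have h2 : HasSum (fun n : ℕ => bc α (n+1) * ((n+1:ℕ) * z^(n+1-1))) (- bY (α+1) z) := by
      refine HasSum.congr_fun' h1 fun n => ?_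
      unfold bc
      have e : α + (n+1:ℕ) + 1 = α + 1 + n + 1 := by push_cast; ring
      rw [e, Nat.factorial_succ]
      have : (n.factorial:ℝ) ≠ 0 := by positivity
      have := (gam_pos (α+1) (by linarith) n).ne'
      push_cast
      field_simp
      ring
    rw [hasSum_nat_add_iff (f := fun n : ℕ => bc α n * (n * z^(n-1))) 1] at h2
    simpa using h2.tsum_eq
  rw [← e]
  exact key

lemma bY_cont (α : ℝ) (hα : -1 < α) : Continuous (bY α) :=
  continuous_iff_continuousAt.2 fun z => (bY_deriv α hα z).continuousAt

lemma besselJ_eq (α t : ℝ) (ht : 0 < t) : besselJ α t = (t/2)^α * bY α ((t/2)^2) := by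
  unfold besselJ bY
  rw [← tsum_mul_left]
  congr 1
  funext k
  have : (t/2)^(2*(k:ℝ)+α) = ((t/2)^2)^k * (t/2)^α := by
    rw [Real.rpow_add (by positivity), ← pow_mul]
    congr 1
    rw [← Real.rpow_natCast]; push_cast; rfl
  rw [this]; unfold bc; ring

lemma besselJ_sign (α t : ℝ) (ht : 0 < t) : 0 < (t/2)^α := by positivity

lemma bc_vf (α : ℝ) (hα : -1 < α) : ∀ n : ℕ, bc α (n+1) * (α+2)^(n+1) = - (bc α 0 / (α+1)) * ((-1)^n * vf (2*(α+1)/3) n) := by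
  have hw : 0 < α + 1 := by linarith
  intro n
  induction n with
  | zero =>
    rw [bc_succ α hα]; simp only [vf]
    have h1 : α + 1 ≠ 0 := hw.ne'
    simp only [Nat.cast_zero, zero_add, add_zero, pow_zero, one_mul, pow_one]
    field_simp; ring
  | succ n ih =>
    rw [bc_succ α hα (n+1), pow_succ (α+2)]
    simp only [vf]
    have : (0:ℝ) ≤ n := Nat.cast_nonneg n
    have h1 : α + n + 2 ≠ 0 := by linarith
    have h2 : 3/2*(2*(α+1)/3)+n+1 = α + n + 2 := by ring
    have h3 : 1+3/2*(2*(α+1)/3) = α+2 := by ring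
    have h4 : α + ((n+1:ℕ):ℝ) + 1 = α + n + 2 := by push_cast; ring
    have h5 : (((n+1:ℕ):ℝ) + 1) = n + 2 := by push_cast; ring
    rw [h2, h3, h4, h5]
    calc _ = (bc α (n+1) * (α+2)^(n+1)) * (-(α+2)/((n+2)*(α+n+2))) := by ring
      _ = _ := by rw [ih]; ring

lemma vf_sum (α : ℝ) (hα : -1 < α) (s : ℝ) :
    HasSum (fun n : ℕ => (-1:ℝ)^n * (vf (2*(α+1)/3) n * s^(n+1)))
      ((α+1) * (1 - bY α ((α+2)*s) / bc α 0)) := by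
  have hw : 0 < α + 1 := by linarith
  have hb := bc_zero_pos α hα
  have hc := bc_vf α hα
  have h := bY_hasSum α hα ((α+2)*s)
  have h2 := (hasSum_nat_add_iff' (f := fun k => bc α k * ((α+2)*s)^k) 1).2 h
  have h3 := h2.mul_left (-((α+1)/bc α 0))
  have e : (α+1) * (1 - bY α ((α+2)*s) / bc α 0) = -((α+1)/bc α 0) * (bY α ((α+2)*s) - ∑ i ∈ Finset.range 1, bc α i * ((α+2)*s)^i) := by
    simp; field_simp; ring
  rw [e]
  refine HasSum.congr_fun' h3 fun n => ?_
  rw [mul_pow, ← mul_assoc (bc α (n+1)), hc]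
  field_simp

lemma bY_two (α : ℝ) (hα : -1 < α) (hα₂ : α ≤ 1/2) : bY α ((α+2)*2) < 0 := by
  have hb := bc_zero_pos α hα
  have h := V_two (2*(α+1)/3) _ (by linarith) (by linarith) (vf_sum α hα 2)
  have hw : 0 < α + 1 := by linarith
  by_contra hc
  have : 0 ≤ bY α ((α+2)*2) / bc α 0 := div_nonneg (not_lt.1 hc) hb.le
  nlinarith [mul_nonneg hw.le this]

lemma bY_four (α : ℝ) (hα : -1 < α) (hα₂ : α ≤ 1/2) : 0 < bY α ((α+2)*(43/10)) := by
  have hb := bc_zero_pos α hα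
  have h := V_four (2*(α+1)/3) _ (by linarith) (by linarith) (vf_sum α hα (43/10))
  have hw : 0 < α + 1 := by linarith
  by_contra hc
  have : bY α ((α+2)*(43/10)) / bc α 0 ≤ 0 := div_nonpos_of_nonpos_of_nonneg (not_lt.1 hc) hb.le
  nlinarith [mul_nonneg hw.le (neg_nonneg.2 this)]

lemma bY_zero (α : ℝ) (hα : -1 < α) : 0 < bY α 0 := by
  have h := bY_hasSum α hα 0
  have h2 : HasSum (fun k => bc α k * (0:ℝ)^k) (bc α 0) := by
    have := hasSum_single (f := fun k => bc α k * (0:ℝ)^k) 0 (fun b hb => by simp [hb])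
    simpa using this
  rw [h.unique h2]; exact bc_zero_pos α hα

lemma bJ_integrable (α δ x : ℝ) (hα : -1 < α) (hδ : -1 < δ + α) (hx : 0 ≤ x) :
    IntervalIntegrable (fun t => t^δ * besselJ α t) MeasureTheory.volume 0 x := by
  have h1 := (intervalIntegral.intervalIntegrable_rpow' (a := 0) (b := x) hδ).mul_continuousOn
    (g := fun t => (2^α)⁻¹ * bY α ((t/2)^2))
    (Continuous.continuousOn (by have := bY_cont α hα; fun_prop))
  refine h1.congr ?_
  rw [Set.uIoc_of_le hx]
  intro t ht
  simp only
  rw [besselJ_eq α t ht.1, Real.div_rpow ht.1.le (by norm_num), Real.rpow_add ht.1]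
  field_simp

lemma bJ_integral (α δ x : ℝ) (hα : -1 < α) (hδ : -1 < δ + α) (hx : 0 < x) :
    HasSum (fun k : ℕ => x^(δ+α+1) * (2^α)⁻¹ * (bc α k * ((x/2)^2)^k / (2*k+δ+α+1)))
      (∫ t in (0:ℝ)..x, t^δ * besselJ α t) := by
  set a : ℕ → ℝ := fun k => bc α k * (4^k)⁻¹ * (2^α)⁻¹ with ha
  set F : ℕ → ℝ → ℝ := fun k t => a k * t^(2*(k:ℝ)+δ+α) with hF
  have hp : ∀ k : ℕ, -1 < 2*(k:ℝ)+δ+α := fun k => by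
    have : (0:ℝ) ≤ k := Nat.cast_nonneg k
    linarith
  have hI : ∀ k : ℕ, ∫ t in Set.Ioc 0 x, t^(2*(k:ℝ)+δ+α) = x^(δ+α+1) * (x^2)^k / (2*k+δ+α+1) := by
    intro k
    rw [← intervalIntegral.integral_of_le hx.le, integral_rpow (Or.inl (hp k)),
      Real.zero_rpow (by linarith [hp k]), sub_zero]
    congr 1
    have e : 2*(k:ℝ)+δ+α+1 = (δ+α+1) + 2*k := by ring
    rw [e, Real.rpow_add hx, ← pow_mul]
    congr 1
    rw [← Real.rpow_natCast]; push_cast; rfl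
  have hint : ∀ k, MeasureTheory.Integrable (F k) (MeasureTheory.volume.restrict (Set.Ioc 0 x)) := by
    intro k
    have := (intervalIntegrable_iff_integrableOn_Ioc_of_le hx.le).1
      (intervalIntegral.intervalIntegrable_rpow' (a := 0) (b := x) (hp k))
    exact this.const_mul _
  have hn : ∀ k, ∫ t in Set.Ioc 0 x, ‖F k t‖ = |a k| * (x^(δ+α+1) * (x^2)^k / (2*k+δ+α+1)) := by
    intro k
    rw [← hI, ← MeasureTheory.integral_const_mul]
    refine MeasureTheory.setIntegral_congr_fun measurableSet_Ioc fun t ht => ?_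
    simp only [hF]
    rw [Real.norm_eq_abs, abs_mul, abs_of_nonneg (Real.rpow_nonneg ht.1.le _)]
  have hs : Summable fun k => ∫ t in Set.Ioc 0 x, ‖F k t‖ := by
    refine Summable.of_nonneg_of_le (fun k => MeasureTheory.integral_nonneg fun t => norm_nonneg _)
      (fun k => ?_) ((bc_summable α hα ((x/2)^2)).mul_left (x^(δ+α+1) * (2^α)⁻¹ / (δ+α+1)))
    rw [hn]
    have : (0:ℝ) ≤ k := Nat.cast_nonneg k
    have h0 : 0 < δ+α+1 := by linarith
    have hpos : (0:ℝ) < 2^α := by positivity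
    have hxp : 0 < x^(δ+α+1) := by positivity
    have e : |a k| = |bc α k| * (4^k)⁻¹ * (2^α)⁻¹ := by
      simp only [ha]
      rw [abs_mul, abs_mul, abs_of_pos (inv_pos.2 hpos), abs_of_pos (by positivity : (0:ℝ) < (4^k)⁻¹)]
    have e2 : |(x/2)^2|^k = (x^2)^k * (4^k)⁻¹ := by
      rw [abs_of_nonneg (by positivity), div_pow, div_pow]; norm_num; rfl
    rw [e, e2]
    calc |bc α k| * (4^k)⁻¹ * (2^α)⁻¹ * (x^(δ+α+1) * (x^2)^k / (2*k+δ+α+1))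
        ≤ |bc α k| * (4^k)⁻¹ * (2^α)⁻¹ * (x^(δ+α+1) * (x^2)^k / (δ+α+1)) := by
          gcongr; linarith
      _ = _ := by ring
  have key := MeasureTheory.hasSum_integral_of_summable_integral_norm hint hs
  have e : ∫ t in Set.Ioc 0 x, ∑' k, F k t = ∫ t in (0:ℝ)..x, t^δ * besselJ α t := by
    rw [intervalIntegral.integral_of_le hx.le]
    refine MeasureTheory.setIntegral_congr_fun measurableSet_Ioc fun t ht => ?_
    simp only [besselJ]
    rw [← tsum_mul_left]
    congr 1
    funext k
    simp only [hF, ha]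
    have ht0 : 0 < t := ht.1
    rw [Real.div_rpow ht0.le (by norm_num), Real.rpow_add (by norm_num : (0:ℝ) < 2),
      show 2*(k:ℝ)+δ+α = δ + (2*k+α) by ring, Real.rpow_add ht0]
    have : (2:ℝ)^(2*(k:ℝ)) = 4^k := by
      rw [Real.rpow_mul (by norm_num), Real.rpow_natCast]; norm_num
    rw [this]; unfold bc; ring
  rw [← e]
  refine HasSum.congr_fun' key fun k => ?_
  simp only [hF]
  rw [MeasureTheory.integral_const_mul, hI]
  simp only [ha]
  have : ((x/2)^2)^k = (x^2)^k * (4^k)⁻¹ := by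
    rw [div_pow, div_pow]; norm_num; rfl
  rw [this]; ring

lemma I_nonneg (α x : ℝ) (hα : -1 < α) (hα₂ : α ≤ 1/2) (hx : 0 < x) (hx2 : (x/2)^2 ≤ (α+2)*(43/10)) :
    0 ≤ ∫ t in (0:ℝ)..x, t^((α+1)/3) * besselJ α t := by
  have hw : 0 < α + 1 := by linarith
  have hb := bc_zero_pos α hα
  set s := (x/2)^2/(α+2) with hs
  have hα2 : 0 < α + 2 := by linarith
  have hs0 : 0 < s := by positivity
  have hs1 : s ≤ 43/10 := by rw [hs, div_le_iff₀ hα2]; linarith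
  have hz : (x/2)^2 = (α+2)*s := by rw [hs]; field_simp
  set A := x^((α+1)/3+α+1) * (2^α)⁻¹ with hA
  have hApos : 0 < A := by positivity
  have h := bJ_integral α ((α+1)/3) x hα (by linarith) hx
  set I := ∫ t in (0:ℝ)..x, t^((α+1)/3) * besselJ α t with hI
  rw [hz] at h
  have h2 := (hasSum_nat_add_iff' (f := fun k : ℕ => A * (bc α k * ((α+2)*s)^k / (2*k+(α+1)/3+α+1))) 1).2 h
  have h3 := h2.mul_left (-(2*(α+1)/(bc α 0 * A)))
  have h4 := key_lim (2*(α+1)/3) s _ (by linarith) (by linarith) hs0 hs1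
    (HasSum.congr_fun' h3 fun n => by
      rw [mul_pow, ← mul_assoc (bc α (n+1)), bc_vf α hα n]
      have : (0:ℝ) ≤ n := Nat.cast_nonneg n
      have e1 : 2*((n+1:ℕ):ℝ) + (α+1)/3+α+1 = 2*(2*(α+1)/3+n+1) := by push_cast; ring
      have e2 : 2*(α+1)/3+n+1 ≠ 0 := by linarith
      rw [e1]; unfold cf
      generalize 2*(α+1)/3+n+1 = q at *
      field_simp)
  by_contra hneg
  push Not at hneg
  simp only [Finset.sum_range_one, pow_zero, Nat.cast_zero, mul_zero, mul_one, zero_add] at h4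
  have e5 : -(2*(α+1)/(bc α 0 * A)) * (I - A * (bc α 0 / ((α+1)/3+α+1))) = 3/2 - (2*(α+1)/(bc α 0 * A)) * I := by
    have : (α+1)/3+α+1 = 4*(α+1)/3 := by ring
    rw [this]; field_simp; ring
  rw [e5] at h4
  have : 0 < (2*(α+1)/(bc α 0 * A)) * (-I) := mul_pos (by positivity) (by linarith)
  linarith

lemma P_eq (α x : ℝ) (hα : -1 < α) (hx : 0 < x) :
    ∫ t in (0:ℝ)..x, t^(α+1) * besselJ α t = x^(2*α+2) * (2^α)⁻¹ / 2 * bY (α+1) ((x/2)^2) := by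
  have h := bJ_integral α (α+1) x hα (by linarith) hx
  have h2 := (bY_hasSum (α+1) (by linarith) ((x/2)^2)).mul_left (x^(2*α+2) * (2^α)⁻¹ / 2)
  refine h.unique (HasSum.congr_fun' h2 fun k => ?_)
  have e : bc α k = (α+k+1) * bc (α+1) k := by
    unfold bc
    have e2 : α + 1 + k + 1 = α + (k+1:ℕ) + 1 := by push_cast; ring
    rw [e2, gam_succ α hα]
    have h1 := (gam_pos α hα k).ne'
    have : (0:ℝ) ≤ k := Nat.cast_nonneg k
    have h3 : α + k + 1 ≠ 0 := by linarith
    field_simp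
  have : (0:ℝ) ≤ k := Nat.cast_nonneg k
  have h3 : 2*(k:ℝ) + (α+1)+α+1 ≠ 0 := by linarith
  have e3 : (α+1)+α+1 = 2*α+2 := by ring
  have e4 : 2*(k:ℝ) + (α+1)+α+1 = 2 * (α+k+1) := by ring
  rw [e3, e, e4]
  have h4 : α + k + 1 ≠ 0 := by linarith
  field_simp

lemma sgn_ivt (y : ℝ → ℝ) (hy : Continuous y) (a b : ℝ) (h : a ≤ b) (hs : y a * y b ≤ 0) :
    ∃ c ∈ Set.Icc a b, y c = 0 := by
  rcases le_total (y a) 0 with ha | ha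
  · rcases le_total 0 (y b) with hb | hb
    · exact intermediate_value_Icc h hy.continuousOn ⟨ha, hb⟩
    · rcases eq_or_lt_of_le ha with h1 | h1
      · exact ⟨a, ⟨le_rfl, h⟩, h1⟩
      · exact ⟨b, ⟨h, le_rfl⟩, by nlinarith⟩
  · rcases le_total (y b) 0 with hb | hb
    · exact intermediate_value_Icc' h hy.continuousOn ⟨hb, ha⟩
    · rcases eq_or_lt_of_le ha with h1 | h1
      · exact ⟨a, ⟨le_rfl, h⟩, h1.symm⟩
      · exact ⟨b, ⟨h, le_rfl⟩, by nlinarith⟩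

lemma F_mono (α z j δ δ' : ℝ) (hα : -1 < α) (hz : 0 < z) (hzj : z < j)
    (hpos : ∀ t ∈ Set.Ioo 0 z, 0 < besselJ α t) (hneg : ∀ t ∈ Set.Ioo z j, besselJ α t < 0)
    (hδ : -1 < δ + α) (hδ' : δ < δ') :
    ∫ t in (0:ℝ)..j, t^δ' * besselJ α t < z^(δ'-δ) * ∫ t in (0:ℝ)..j, t^δ * besselJ α t := by
  have hj : 0 < j := hz.trans hzj
  have i1 := bJ_integrable α δ j hα hδ hj.le
  have i2 := bJ_integrable α δ' j hα (by linarith) hj.le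
  have i3 := (i1.const_mul (z^(δ'-δ))).sub i2
  rw [← sub_pos, ← intervalIntegral.integral_const_mul, ← intervalIntegral.integral_sub (i1.const_mul _) i2]
  have sub1 : Set.uIcc 0 z ⊆ Set.uIcc 0 j := by
    rw [Set.uIcc_of_le hz.le, Set.uIcc_of_le hj.le]; exact Set.Icc_subset_Icc le_rfl hzj.le
  have sub2 : Set.uIcc z j ⊆ Set.uIcc 0 j := by
    rw [Set.uIcc_of_le hzj.le, Set.uIcc_of_le hj.le]; exact Set.Icc_subset_Icc hz.le le_rfl
  have i4 := i3.mono_set sub1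
  have i5 := i3.mono_set sub2
  have e : ∀ t, 0 < t → z^(δ'-δ) * (t^δ * besselJ α t) - t^δ' * besselJ α t =
      t^δ * (besselJ α t * (z^(δ'-δ) - t^(δ'-δ))) := by
    intro t ht
    have : t^δ' = t^δ * t^(δ'-δ) := by rw [← Real.rpow_add ht]; congr 1; ring
    rw [this]; ring
  rw [← intervalIntegral.integral_add_adjacent_intervals i4 i5]
  refine add_pos (intervalIntegral.intervalIntegral_pos_of_pos_on i4 ?_ hz)
    (intervalIntegral.intervalIntegral_pos_of_pos_on i5 ?_ hzj)
  · intro t ht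
    rw [e t ht.1]
    refine mul_pos (Real.rpow_pos_of_pos ht.1 _) (mul_pos (hpos t ht) (sub_pos.2 ?_))
    exact Real.rpow_lt_rpow ht.1.le ht.2 (by linarith)
  · intro t ht
    have ht0 := hz.trans ht.1
    rw [e t ht0]
    refine mul_pos (Real.rpow_pos_of_pos ht0 _) (mul_pos_of_neg_of_neg (hneg t ht) (sub_neg.2 ?_))
    exact Real.rpow_lt_rpow hz.le ht.1 (by linarith)

lemma P_neg (α z j : ℝ) (hα : -1 < α) (hz : 0 < z) (hzj : z < j)
    (hz0 : bY α ((z/2)^2) = 0) (hj0 : bY α ((j/2)^2) = 0)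
    (hneg : ∀ t ∈ Set.Ioo z j, besselJ α t < 0) :
    ∫ t in (0:ℝ)..j, t^(α+1) * besselJ α t < 0 := by
  have hj : 0 < j := hz.trans hzj
  by_contra hP
  push Not at hP
  have hd : ∀ x, HasDerivAt (fun x => bY α ((x/2)^2)) (- bY (α+1) ((x/2)^2) * (x/2)) x := by
    intro x
    have h1 : HasDerivAt (fun x : ℝ => (x/2)^2) (x/2) x := by
      have := ((hasDerivAt_id x).div_const 2).pow 2
      have e : (↑2 * (id x / 2) ^ (2 - 1) * (1 / 2) : ℝ) = x/2 := by simp; ring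
      exact e ▸ this
    exact (bY_deriv α hα ((x/2)^2)).comp x h1
  obtain ⟨c, hc, hc0⟩ := exists_hasDerivAt_eq_zero (f := fun x => bY α ((x/2)^2)) hzj
    (fun x _ => (hd x).continuousAt.continuousWithinAt) (by simp only [hz0, hj0]) (fun x _ => hd x)
  have hc1 : 0 < c := hz.trans hc.1
  have hY : bY (α+1) ((c/2)^2) = 0 := by
    rcases mul_eq_zero.1 hc0 with h | h
    · linarith
    · linarith
  have hPc : ∫ t in (0:ℝ)..c, t^(α+1) * besselJ α t = 0 := by
    rw [P_eq α c hα hc1, hY, mul_zero]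
  have i1 := bJ_integrable α (α+1) j hα (by linarith) hj.le
  have i2 := bJ_integrable α (α+1) c hα (by linarith) hc1.le
  have i3 := i2.symm.trans i1
  rw [← intervalIntegral.integral_add_adjacent_intervals i2 i3, hPc, zero_add] at hP
  have : 0 < ∫ t in c..j, -(t^(α+1) * besselJ α t) := by
    refine intervalIntegral.intervalIntegral_pos_of_pos_on i3.neg ?_ hc.2
    intro t ht
    have ht0 := hc1.trans ht.1
    have := mul_pos (Real.rpow_pos_of_pos ht0 (α+1)) (neg_pos.2 (hneg t ⟨hc.1.trans ht.1, ht.2⟩))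
    linarith
  rw [intervalIntegral.integral_neg] at this
  linarith

theorem stmt10 (α : ℝ) (hα₁ : -1 < α) (hα₂ : α ≤ 1 / 2)
    (j : ℝ) (hj : 0 < j) (hjzero : besselJ α j = 0)
    (hsecond : ∃! z : ℝ, 0 < z ∧ z < j ∧ besselJ α z = 0)
    (β : ℝ) (hβ₁ : -1 / 2 < β) (hβ₂ : β < α + 1)
    (hroot : ∫ t in (0 : ℝ)..j, t ^ (-β) * besselJ α t = 0) :
    max (-α - 1) (-1 / 2) < β ∧ β ≤ -(α + 1) / 3 := by
  obtain ⟨z, ⟨hz, hzj, hzz⟩, huniq⟩ := hsecond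
  have hyc : Continuous (fun x : ℝ => bY α ((x/2)^2)) := by
    have := bY_cont α hα₁
    fun_prop
  set y : ℝ → ℝ := fun x => bY α ((x/2)^2) with hy
  have hJ : ∀ x, 0 < x → besselJ α x = (x/2)^α * y x := fun x hx => besselJ_eq α x hx
  have hfac : ∀ x : ℝ, 0 < x → 0 < (x/2)^α := fun x hx => besselJ_sign α x hx
  have hyz : y z = 0 := by
    have := hJ z hz
    rw [hzz] at this
    exact (mul_eq_zero.1 this.symm).resolve_left (hfac z hz).ne'
  have hyj : y j = 0 := by
    have := hJ j hj
    rw [hjzero] at this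
    exact (mul_eq_zero.1 this.symm).resolve_left (hfac j hj).ne'
  have hy0 : 0 < y 0 := by
    have := bY_zero α hα₁
    simpa [hy] using this
  have hyne : ∀ x, 0 < x → x < j → y x = 0 → x = z := by
    intro x h1 h2 h3
    exact huniq x ⟨h1, h2, by rw [hJ x h1, h3, mul_zero]⟩
  have hposy : ∀ x, 0 < x → x < z → 0 < y x := by
    intro x h1 h2
    by_contra hc
    obtain ⟨c, hc1, hc2⟩ := sgn_ivt y hyc 0 x h1.le (mul_nonpos_of_nonneg_of_nonpos hy0.le (not_lt.1 hc))
    have hc0 : 0 < c := by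
      rcases eq_or_lt_of_le hc1.1 with h | h
      · rw [← h] at hc2; linarith
      · exact h
    have := hyne c hc0 (by linarith [hc1.2]) hc2
    linarith [hc1.2]
  have hpos : ∀ t ∈ Set.Ioo 0 z, 0 < besselJ α t := fun t ht => by
    rw [hJ t ht.1]; exact mul_pos (hfac t ht.1) (hposy t ht.1 ht.2)
  have hnegy : ∀ x, z < x → x < j → y x < 0 := by
    by_contra hcon
    push Not at hcon
    obtain ⟨x0, h1, h2, h3⟩ := hcon
    have hx0 : 0 < y x0 := lt_of_le_of_ne h3 fun h => by
      have := hyne x0 (hz.trans h1) h2 h.symm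
      linarith
    have hall : ∀ x ∈ Set.Ioo z j, 0 < besselJ α x := by
      intro x hx
      have hxp := hz.trans hx.1
      rw [hJ x hxp]
      refine mul_pos (hfac x hxp) ?_
      by_contra hc
      have hprod : y x * y x0 ≤ 0 := mul_nonpos_of_nonpos_of_nonneg (not_lt.1 hc) hx0.le
      rcases le_total x x0 with hle | hle
      · obtain ⟨c, hc1, hc2⟩ := sgn_ivt y hyc x x0 hle hprod
        have := hyne c (by linarith [hc1.1]) (by linarith [hc1.2]) hc2
        linarith [hc1.1, hx.1]
      · obtain ⟨c, hc1, hc2⟩ := sgn_ivt y hyc x0 x hle (by linarith)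
        have := hyne c (by linarith [hc1.1]) (by linarith [hc1.2, hx.2]) hc2
        linarith [hc1.1]
    have i0 := bJ_integrable α (-β) z hα₁ (by linarith) hz.le
    have i1 := bJ_integrable α (-β) j hα₁ (by linarith) hj.le
    have i2 := i0.symm.trans i1
    rw [← intervalIntegral.integral_add_adjacent_intervals i0 i2] at hroot
    have p1 := intervalIntegral.intervalIntegral_pos_of_pos_on i0
      (fun t ht => mul_pos (Real.rpow_pos_of_pos ht.1 _) (hpos t ht)) hz
    have p2 := intervalIntegral.intervalIntegral_pos_of_pos_on i2
      (fun t ht => mul_pos (Real.rpow_pos_of_pos (hz.trans ht.1) _) (hall t ht)) hzj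
    linarith
  have hneg : ∀ t ∈ Set.Ioo z j, besselJ α t < 0 := fun t ht => by
    have htp := hz.trans ht.1
    rw [hJ t htp]; exact mul_neg_of_pos_of_neg (hfac t htp) (hnegy t ht.1 ht.2)
  have hjb : (j/2)^2 ≤ (α+2)*(43/10) := by
    by_contra hc
    push Not at hc
    have hα2 : 0 < α + 2 := by linarith
    set X1 := 2*√((α+2)*2) with hX1
    set X2 := 2*√((α+2)*(43/10)) with hX2
    have e1 : (X1/2)^2 = (α+2)*2 := by
      rw [hX1, mul_div_cancel_left₀ _ (by norm_num), Real.sq_sqrt (by positivity)]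
    have e2 : (X2/2)^2 = (α+2)*(43/10) := by
      rw [hX2, mul_div_cancel_left₀ _ (by norm_num), Real.sq_sqrt (by positivity)]
    have hX1p : 0 < X1 := by positivity
    have hX2p : 0 < X2 := by positivity
    have h12 : X1 < X2 := by nlinarith
    have h2j : X2 < j := by nlinarith
    have v1 : y X1 < 0 := by simp only [hy]; rw [e1]; exact bY_two α hα₁ hα₂
    have v2 : 0 < y X2 := by simp only [hy]; rw [e2]; exact bY_four α hα₁ hα₂
    rcases lt_trichotomy X2 z with h | h | h
    · have := hposy X1 hX1p (h12.trans h); linarith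
    · rw [h] at v2; linarith
    · have := hnegy X2 h h2j; linarith
  have hI := I_nonneg α j hα₁ hα₂ hj hjb
  have hP := P_neg α z j hα₁ hz hzj hyz hyj hneg
  refine ⟨max_lt ?_ hβ₁, ?_⟩
  · by_contra hc
    have hle : α + 1 ≤ -β := by linarith
    rcases eq_or_lt_of_le hle with h | h
    · rw [← h] at hroot; linarith
    · have := F_mono α z j (α+1) (-β) hα₁ hz hzj hpos hneg (by linarith) h
      rw [hroot] at this
      have h2 := mul_neg_of_pos_of_neg (Real.rpow_pos_of_pos hz (-β-(α+1))) hP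
      linarith
  · by_contra hc
    have h : -β < (α+1)/3 := by linarith
    have := F_mono α z j (-β) ((α+1)/3) hα₁ hz hzj hpos hneg (by linarith) h
    rw [hroot, mul_zero] at this
    linarith
end

section
/- Let α > −1, γ > −1 and β < α + 1 be real numbers. Then for every x > 0, ∫₀ˣ (x² − t²)^γ t^{−β} J_α(t) dt = [B(γ+1, (α−β+1)/2) / (2^{α+1} Γ(α+1))] · x^{α−β+2γ+1} · ₁F₂((α−β+1)/2; α+1, (α−β+1)/2 + γ + 1; −x²/4), where B denotes Euler's beta function. -/
open Real

/-- Pochhammer symbol `(a)_k = a (a+1) ⋯ (a+k-1)` for a real number `a`. -/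
noncomputable def poch (a : ℝ) (k : ℕ) : ℝ := ∏ i ∈ Finset.range k, (a + i)

/-- The generalized hypergeometric series `₁F₂(a; b, c; z)`. -/
noncomputable def oneF2 (a b c z : ℝ) : ℝ :=
  ∑' k : ℕ, poch a k / ((k.factorial : ℝ) * poch b k * poch c k) * z ^ k

/-- Euler's beta function `B(p,q) = Γ(p)Γ(q)/Γ(p+q)`. -/
noncomputable def eulerBeta (p q : ℝ) : ℝ :=
  Real.Gamma p * Real.Gamma q / Real.Gamma (p + q)


lemma aux_poch_pos {b : ℝ} (hb : 0 < b) (n : ℕ) : 0 < poch b n := by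
  unfold poch
  exact Finset.prod_pos fun i _ => by positivity

lemma aux_poch_ge {b : ℝ} (hb : 0 < b) (n : ℕ) : min b 1 ≤ poch b n := by
  induction n with
  | zero => simp [poch]
  | succ n ih =>
    have h : poch b (n + 1) = poch b n * (b + n) := by
      simp [poch, Finset.prod_range_succ]
    rw [h]
    rcases Nat.eq_zero_or_pos n with rfl | hn
    · simp [poch]
    · have h1 : (1 : ℝ) ≤ n := by exact_mod_cast hn
      have h2 := aux_poch_pos hb n
      nlinarith

lemma aux_Gamma_poch {b : ℝ} (hb : 0 < b) (n : ℕ) :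
    Real.Gamma (b + n) = poch b n * Real.Gamma b := by
  induction n with
  | zero => simp [poch]
  | succ n ih =>
    have h : poch b (n + 1) = poch b n * (b + n) := by
      simp [poch, Finset.prod_range_succ]
    rw [h]
    push_cast
    rw [← add_assoc, Real.Gamma_add_one (by positivity), ih]
    ring

lemma aux_summable {b : ℝ} (hb : 0 < b) {y : ℝ} (hy : 0 ≤ y) :
    Summable fun n : ℕ => y ^ n / ((n.factorial : ℝ) * Real.Gamma (b + n)) := by
  have hG := Real.Gamma_pos_of_pos hb
  have hm : 0 < min b 1 := lt_min hb one_pos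
  refine Summable.of_nonneg_of_le (fun n => ?_) (fun n => ?_)
    ((Real.summable_pow_div_factorial y).mul_right ((min b 1 * Real.Gamma b)⁻¹))
  · have := Real.Gamma_pos_of_pos (show 0 < b + n by positivity)
    positivity
  · rw [aux_Gamma_poch hb, ← div_eq_mul_inv, div_div]
    have := aux_poch_ge hb n
    gcongr

lemma aux_beta {a p q : ℝ} (ha : 0 < a) (hp : 0 < p) (hq : 0 < q) :
    ∫ u in (0 : ℝ)..a, u ^ (p - 1) * (a - u) ^ (q - 1) = a ^ (p + q - 1) * eulerBeta q p := by
  have h := Complex.betaIntegral_scaled (p : ℂ) (q : ℂ) ha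
  rw [Complex.betaIntegral_eq_Gamma_mul_div _ _ (by simpa) (by simpa)] at h
  have h2 : ∫ u in (0 : ℝ)..a, (u : ℂ) ^ ((p : ℂ) - 1) * ((a : ℂ) - u) ^ ((q : ℂ) - 1) =
      ∫ u in (0 : ℝ)..a, ((u ^ (p - 1) * (a - u) ^ (q - 1) : ℝ) : ℂ) := by
    apply intervalIntegral.integral_congr
    intro u hu
    rw [Set.uIcc_of_le ha.le] at hu
    simp only
    push_cast
    rw [Complex.ofReal_cpow hu.1, Complex.ofReal_cpow (sub_nonneg.2 hu.2)]
    push_cast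
    rfl
  rw [h2, intervalIntegral.integral_ofReal, ← Complex.ofReal_add, Complex.Gamma_ofReal,
    Complex.Gamma_ofReal, Complex.Gamma_ofReal] at h
  have h3 : (a : ℂ) ^ (((p + q : ℝ) : ℂ) - 1) = ((a ^ (p + q - 1) : ℝ) : ℂ) := by
    rw [Complex.ofReal_cpow ha.le]; push_cast; rfl
  rw [h3] at h
  have h4 : ∫ u in (0 : ℝ)..a, u ^ (p - 1) * (a - u) ^ (q - 1) =
      a ^ (p + q - 1) * (Real.Gamma p * Real.Gamma q / Real.Gamma (p + q)) := by
    exact_mod_cast h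
  rw [h4, eulerBeta, add_comm q p, mul_comm (Real.Gamma q)]

lemma aux_beta_sq {x p γ : ℝ} (hx : 0 < x) (hp : 0 < p) (hγ : -1 < γ) :
    ∫ t in (0 : ℝ)..x, (x ^ 2 - t ^ 2) ^ γ * t ^ (2 * p - 1) =
      x ^ (2 * p + 2 * γ) / 2 * eulerBeta (γ + 1) p := by
  have h := aux_beta (a := x ^ 2) (by positivity) hp (show 0 < γ + 1 by linarith)
  have hs := MeasureTheory.integral_comp_rpow_Ioi_of_pos (p := 2)
    (g := (Set.Iic (x ^ 2)).indicator fun u : ℝ => u ^ (p - 1) * (x ^ 2 - u) ^ (γ + 1 - 1)) two_pos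
  rw [MeasureTheory.setIntegral_indicator measurableSet_Iic, Set.Ioi_inter_Iic,
    ← intervalIntegral.integral_of_le (by positivity), h] at hs
  have e : (x ^ 2) ^ (p + (γ + 1) - 1) = x ^ (2 * p + 2 * γ) := by
    rw [← Real.rpow_natCast, ← Real.rpow_mul hx.le]
    congr 1
    push_cast
    ring
  rw [e] at hs
  have h5 : ∫ t in Set.Ioi (0 : ℝ), (2 * t ^ ((2 : ℝ) - 1)) •
      (Set.Iic (x ^ 2)).indicator (fun u : ℝ => u ^ (p - 1) * (x ^ 2 - u) ^ (γ + 1 - 1))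
        (t ^ (2 : ℝ)) = ∫ t in Set.Ioi (0 : ℝ),
      (Set.Iic x).indicator (fun t => 2 * ((x ^ 2 - t ^ 2) ^ γ * t ^ (2 * p - 1))) t := by
    apply MeasureTheory.setIntegral_congr_fun measurableSet_Ioi
    intro t ht
    have ht : 0 < t := ht
    simp only [Real.rpow_two, smul_eq_mul]
    by_cases htx : t ≤ x
    · rw [Set.indicator_of_mem (by simpa using pow_le_pow_left₀ ht.le htx 2),
        Set.indicator_of_mem (by simpa using htx)]
      have e2 : t ^ (2 * p - 1) = t ^ ((2 : ℝ) - 1) * (t ^ 2) ^ (p - 1) := by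
        rw [← Real.rpow_two t, ← Real.rpow_mul ht.le, ← Real.rpow_add ht]
        congr 1
        ring
      rw [e2, add_sub_cancel_right]
      ring
    · rw [Set.indicator_of_notMem, Set.indicator_of_notMem (by simpa using htx), mul_zero]
      simp only [Set.mem_Iic, not_le] at *
      exact pow_lt_pow_left₀ htx hx.le (by norm_num)
  rw [h5, MeasureTheory.setIntegral_indicator measurableSet_Iic, Set.Ioi_inter_Iic,
    ← intervalIntegral.integral_of_le hx.le, intervalIntegral.integral_const_mul] at hs
  linarith

lemma aux_beta_pos {p q : ℝ} (hp : 0 < p) (hq : 0 < q) : 0 < eulerBeta p q := by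
  have h1 := Real.Gamma_pos_of_pos hp
  have h2 := Real.Gamma_pos_of_pos hq
  have h3 := Real.Gamma_pos_of_pos (add_pos hp hq)
  unfold eulerBeta
  positivity

lemma aux_integrable {x p γ : ℝ} (hx : 0 < x) (hp : 0 < p) (hγ : -1 < γ) :
    IntervalIntegrable (fun t : ℝ => (x ^ 2 - t ^ 2) ^ γ * t ^ (2 * p - 1))
      MeasureTheory.volume 0 x := by
  by_contra h
  have h1 := intervalIntegral.integral_undef h
  rw [aux_beta_sq hx hp hγ] at h1
  have h2 := aux_beta_pos (show 0 < γ + 1 by linarith) hp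
  have : 0 < x ^ (2 * p + 2 * γ) / 2 * eulerBeta (γ + 1) p := by positivity
  linarith

/-- Splitting of the general Bessel term. -/
lemma aux_term {t : ℝ} (ht : 0 < t) (α : ℝ) (k : ℕ) :
    (t / 2) ^ (2 * (k : ℝ) + α) = (t ^ 2 / 4) ^ k * (t ^ α / 2 ^ α) := by
  rw [Real.rpow_add (by positivity), Real.div_rpow (z := α) ht.le two_pos.le,
    Real.rpow_mul (by positivity), Real.rpow_natCast, Real.rpow_two]
  congr 2
  ring

theorem stmt13 (α β γ : ℝ) (hα : -1 < α) (hγ : -1 < γ) (hβ : β < α + 1) :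
    ∀ x : ℝ, 0 < x →
      ∫ t in (0 : ℝ)..x, (x ^ 2 - t ^ 2) ^ γ * t ^ (-β) * besselJ α t =
        eulerBeta (γ + 1) ((α - β + 1) / 2) / ((2 : ℝ) ^ (α + 1) * Real.Gamma (α + 1)) *
          x ^ (α - β + 2 * γ + 1) *
          oneF2 ((α - β + 1) / 2) (α + 1) ((α - β + 1) / 2 + γ + 1) (-x ^ 2 / 4) := by
  intro x hx
  have hb : 0 < α + 1 := by linarith
  set a := (α - β + 1) / 2 with ha
  have ha0 : 0 < a := by rw [ha]; linarith
  have hGk : ∀ k : ℕ, 0 < Real.Gamma (α + 1 + k) := fun k =>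
    Real.Gamma_pos_of_pos (by positivity)
  have key : HasSum (fun k : ℕ => ∫ t in (0 : ℝ)..x, (x ^ 2 - t ^ 2) ^ γ * t ^ (-β) *
      ((-1 : ℝ) ^ k / ((k.factorial : ℝ) * Real.Gamma (α + k + 1)) *
        (t / 2) ^ (2 * (k : ℝ) + α)))
      (∫ t in (0 : ℝ)..x, (x ^ 2 - t ^ 2) ^ γ * t ^ (-β) * besselJ α t) := by
    refine intervalIntegral.hasSum_integral_of_dominated_convergence
      (fun k t => ((x ^ 2 / 4) ^ k / ((k.factorial : ℝ) * Real.Gamma (α + 1 + k))) *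
        (((x ^ 2 - t ^ 2) ^ γ * t ^ (2 * a - 1)) / 2 ^ α)) ?_ ?_ ?_ ?_ ?_
    · intro k
      apply Measurable.aestronglyMeasurable
      fun_prop
    · intro k
      refine Filter.Eventually.of_forall fun t ht => ?_
      rw [Set.uIoc_of_le hx.le] at ht
      have ht0 := ht.1
      have htx := ht.2
      have h0 : 0 ≤ x ^ 2 - t ^ 2 := by nlinarith
      have e2 : t ^ (2 * a - 1) = t ^ (-β) * t ^ α := by
        rw [← Real.rpow_add ht0]; congr 1; rw [ha]; ring
      have hG := hGk k
      rw [aux_term ht0, e2, show α + (k : ℝ) + 1 = α + 1 + k by ring]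
      have e3 : ‖(x ^ 2 - t ^ 2) ^ γ * t ^ (-β) *
          ((-1 : ℝ) ^ k / ((k.factorial : ℝ) * Real.Gamma (α + 1 + k)) *
            ((t ^ 2 / 4) ^ k * (t ^ α / 2 ^ α)))‖ =
          ((t ^ 2 / 4) ^ k / ((k.factorial : ℝ) * Real.Gamma (α + 1 + k))) *
          ((x ^ 2 - t ^ 2) ^ γ * (t ^ (-β) * t ^ α) / 2 ^ α) := by
        have h1 : 0 ≤ (x ^ 2 - t ^ 2) ^ γ := Real.rpow_nonneg h0 _
        simp only [norm_mul, norm_div, norm_pow, norm_neg, norm_one, one_pow, Real.norm_eq_abs]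
        rw [abs_of_nonneg h1, abs_of_pos (Real.rpow_pos_of_pos ht0 _), abs_of_pos hG,
          abs_of_pos (Real.rpow_pos_of_pos ht0 _), abs_of_pos (Real.rpow_pos_of_pos two_pos _),
          abs_of_pos ht0, Nat.abs_cast, abs_of_pos (by norm_num : (0 : ℝ) < 4)]
        ring
      rw [e3]
      have h1 : 0 ≤ (x ^ 2 - t ^ 2) ^ γ := Real.rpow_nonneg h0 _
      gcongr
    · refine Filter.Eventually.of_forall fun t ht => ?_
      exact (aux_summable hb (by positivity)).mul_right _
    · simp_rw [tsum_mul_right]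
      exact ((aux_integrable hx ha0 hγ).div_const _).const_mul _
    · refine Filter.Eventually.of_forall fun t ht => ?_
      rw [Set.uIoc_of_le hx.le] at ht
      have ht0 := ht.1
      apply HasSum.mul_left
      apply Summable.hasSum
      refine Summable.of_norm ?_
      refine ((aux_summable hb (show 0 ≤ t ^ 2 / 4 by positivity)).mul_right
        (t ^ α / 2 ^ α)).congr fun k => ?_
      have hG := hGk k
      rw [aux_term ht0, show α + (k : ℝ) + 1 = α + 1 + k by ring]
      simp only [norm_mul, norm_div, norm_pow, norm_neg, norm_one, one_pow, Real.norm_eq_abs]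
      rw [abs_of_pos hG,
          abs_of_pos (Real.rpow_pos_of_pos ht0 _), abs_of_pos (Real.rpow_pos_of_pos two_pos _),
          abs_of_pos ht0, Nat.abs_cast, abs_of_pos (by norm_num : (0 : ℝ) < 4)]
      ring
  rw [← key.tsum_eq, oneF2, ← tsum_mul_left]
  congr 1
  ext k
  have e1 : ∫ t in (0 : ℝ)..x, (x ^ 2 - t ^ 2) ^ γ * t ^ (-β) *
      ((-1 : ℝ) ^ k / ((k.factorial : ℝ) * Real.Gamma (α + k + 1)) *
        (t / 2) ^ (2 * (k : ℝ) + α)) =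
      ∫ t in (0 : ℝ)..x, ((-1 : ℝ) ^ k / ((k.factorial : ℝ) * Real.Gamma (α + 1 + k)) *
        ((1 / 4) ^ k / 2 ^ α)) * ((x ^ 2 - t ^ 2) ^ γ * t ^ (2 * (a + k) - 1)) := by
    apply intervalIntegral.integral_congr_ae
    refine Filter.Eventually.of_forall fun t ht => ?_
    rw [Set.uIoc_of_le hx.le] at ht
    have ht0 := ht.1
    have e2 : t ^ (2 * (a + k) - 1) = t ^ (-β) * t ^ α * (t ^ 2) ^ k := by
      rw [← Real.rpow_two, ← Real.rpow_natCast, ← Real.rpow_mul ht0.le, ← Real.rpow_add ht0,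
        ← Real.rpow_add ht0]
      congr 1; rw [ha]; ring
    rw [aux_term ht0, e2, show α + (k : ℝ) + 1 = α + 1 + k by ring, div_pow, div_pow]
    ring
  rw [e1, intervalIntegral.integral_const_mul, aux_beta_sq hx (by positivity) hγ]
  have e3 : x ^ (2 * (a + k) + 2 * γ) = x ^ (α - β + 2 * γ + 1) * (x ^ 2) ^ k := by
    rw [← Real.rpow_two, ← Real.rpow_natCast, ← Real.rpow_mul hx.le, ← Real.rpow_add hx]
    congr 1; rw [ha]; ring
  have hc : 0 < a + γ + 1 := by linarith
  rw [e3, eulerBeta, eulerBeta, show γ + 1 + (a + k) = a + γ + 1 + k by ring,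
    show γ + 1 + a = a + γ + 1 by ring, aux_Gamma_poch hb, aux_Gamma_poch ha0,
    aux_Gamma_poch hc, Real.rpow_add_one two_ne_zero,
    show -x ^ 2 / 4 = (-1) * (1 / 4) * x ^ 2 by ring, mul_pow, mul_pow]
  have g1 := (aux_poch_pos hb k).ne'
  have g2 := (aux_poch_pos hc k).ne'
  have g3 := (Real.Gamma_pos_of_pos hb).ne'
  have g4 := (Real.Gamma_pos_of_pos hc).ne'
  have g5 := (Real.rpow_pos_of_pos two_pos α).ne'
  field_simp
end
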